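/- arXiv:1907.02373 — 8 statements merged into one kernel-verified Lean document; each statement's English description precedes it below -/
import Mathlib

section
/- Let n ≥ 1, q ≥ 1, let X : Matrix (Fin q) (Fin n) (ZMod 2) have linearly independent rows, and let H be the submodule of (Fin n → ZMod 2) spanned by the rows of X. Then for all j, k : Fin n with j ≠ k, the number of v ∈ H with v j + v k = 1 equals 2^(q−1) if and only if the j-th and k-th columns of X are different, i.e., (fun i => X i j) ≠ (fun i => X i k). (Equivalently: the two-factor interaction F_j F_k is estimable from the blocked 2^n factorial iff the corresponding two columns of X differ.) -/
/-!
For `c ≠ 0`, the level set `{φ = c}` of a linear functional `φ` on a finite `K`-vector space is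
empty if `φ = 0`; if `φ ≠ 0` it is a translate of `ker φ` and so contains a fraction `1 / |K|` of
the space. The functional `v ↦ v j - v k` on the row space of `X` takes the value `X i j - X i k`
on the `i`-th row, so it vanishes exactly when columns `j` and `k` agree. Over `ZMod 2` the
functional is `v ↦ v j + v k`, and the fraction is one half.
-/

theorem natCard_fiber_mul_natCard_of_surjective {G A : Type*} [AddGroup G] [AddGroup A]
    {f : G →+ A} (hf : Function.Surjective f) (a : A) :
    Nat.card {g // f g = a} * Nat.card A = Nat.card G := by
  have fiber_card : Nat.card {g // f g = a} = Nat.card f.ker :=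
    Nat.card_congr (AddMonoidHom.fiberEquivKerOfSurjective hf a)
  have ker_index : f.ker.index = Nat.card A := by
    rw [AddSubgroup.index_ker, AddMonoidHom.range_eq_top.mpr hf, AddSubgroup.card_top]
  rw [fiber_card, ← ker_index, AddSubgroup.card_mul_index]

theorem domRestrict_span_range_ne_zero_iff {R V W ι : Type*} [Semiring R] [AddCommMonoid V]
    [AddCommMonoid W] [Module R V] [Module R W] (φ : V →ₗ[R] W) (b : ι → V) :
    φ.domRestrict (Submodule.span R (Set.range b)) ≠ 0 ↔ ∃ i, φ (b i) ≠ 0 := by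
  have vanish_iff : φ.domRestrict (Submodule.span R (Set.range b)) = 0 ↔
      Set.EqOn φ (0 : V →ₗ[R] W) (Submodule.span R (Set.range b)) := by
    simp [LinearMap.ext_iff, Set.EqOn]
  rw [Ne, vanish_iff, LinearMap.eqOn_span_iff]
  simp [Set.EqOn]

theorem natCard_span_range_of_linearIndependent {R V ι : Type*} [Ring R] [AddCommGroup V]
    [Module R V] [Finite ι] {b : ι → V} (hb : LinearIndependent R b) :
    Nat.card (Submodule.span R (Set.range b)) = Nat.card R ^ Nat.card ι := by
  rw [Nat.card_congr (Module.Basis.span hb).equivFun.toEquiv, Nat.card_fun]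

section LinearFunctional

variable {K V ι : Type*} [DivisionRing K] [AddCommGroup V] [Module K V]

theorem natCard_fiber_mul_natCard_eq_iff_ne_zero [Finite V] (φ : V →ₗ[K] K) {c : K}
    (hc : c ≠ 0) : Nat.card {v // φ v = c} * Nat.card K = Nat.card V ↔ φ ≠ 0 := by
  constructor
  · rintro h rfl
    have fiber_empty : IsEmpty {v : V // (0 : V →ₗ[K] K) v = c} := ⟨fun v => hc v.2.symm⟩
    rw [Nat.card_of_isEmpty, zero_mul] at h
    exact Nat.card_pos.ne h
  · intro hφ
    exact natCard_fiber_mul_natCard_of_surjective (f := φ.toAddMonoidHom) (φ.surjective hφ) c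

theorem natCard_span_fiber_mul_natCard_eq_iff [Finite K] [Finite ι] (φ : V →ₗ[K] K) (b : ι → V)
    {c : K} (hc : c ≠ 0) :
    Nat.card {v // v ∈ Submodule.span K (Set.range b) ∧ φ v = c} * Nat.card K =
        Nat.card (Submodule.span K (Set.range b)) ↔
      ∃ i, φ (b i) ≠ 0 := by
  have : Finite (Submodule.span K (Set.range b)) := by
    have : Module.Finite K (Submodule.span K (Set.range b)) :=
      Module.Finite.span_of_finite K (Set.finite_range b)
    exact Module.finite_of_finite K
  rw [← domRestrict_span_range_ne_zero_iff, ← natCard_fiber_mul_natCard_eq_iff_ne_zero _ hc,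
    ← Nat.card_congr (Equiv.subtypeSubtypeEquivSubtypeInter _ (φ · = c))]
  rfl

end LinearFunctional

theorem stmt3_general {K ι κ : Type*} [DivisionRing K] [Finite K] [Finite ι] (X : Matrix ι κ K)
    {c : K} (hc : c ≠ 0) (j k : κ) :
    Nat.card {v // v ∈ Submodule.span K (Set.range fun i => X i) ∧ v j - v k = c} * Nat.card K =
        Nat.card (Submodule.span K (Set.range fun i => X i)) ↔
      (fun i => X i j) ≠ (fun i => X i k) := by
  rw [Function.ne_iff]
  let contrast : (κ → K) →ₗ[K] K :=
    LinearMap.proj (R := K) (φ := fun _ => K) j - LinearMap.proj (R := K) (φ := fun _ => K) k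
  simpa only [contrast, LinearMap.sub_apply, LinearMap.proj_apply, sub_ne_zero] using
    natCard_span_fiber_mul_natCard_eq_iff contrast (fun i => X i) hc

/-- Corollary 2: a two-factor interaction `F_j F_k` is estimable from a blocked `2^n`
factorial iff the corresponding two columns of the generator matrix `X` differ. -/
theorem stmt3 (n q : ℕ) (hn : 1 ≤ n) (hq : 1 ≤ q)
    (X : Matrix (Fin q) (Fin n) (ZMod 2))
    (hX : LinearIndependent (ZMod 2) (fun i => X i))
    (H : Submodule (ZMod 2) (Fin n → ZMod 2))
    (hH : H = Submodule.span (ZMod 2) (Set.range fun i => X i)) :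
    ∀ j k : Fin n, j ≠ k →
      (Nat.card {v : Fin n → ZMod 2 // v ∈ H ∧ v j + v k = 1} = 2 ^ (q - 1) ↔
        (fun i => X i j) ≠ (fun i => X i k)) := by
  rintro j k -
  simpa only [hH, CharTwo.sub_eq_add, natCard_span_range_of_linearIndependent hX, Nat.card_zmod,
    Nat.card_fin, ← pow_sub_one_mul (Nat.one_le_iff_ne_zero.mp hq) 2,
    Nat.mul_left_inj two_ne_zero] using stmt3_general X one_ne_zero j k
end

section
/- Let q ≥ 1 and n ≥ 1, and let X : Matrix (Fin q) (Fin n) (ZMod 2) be a matrix all of whose columns are nonzero. Write v = n / (2^q − 1) (integer division) and w = n % (2^q − 1). Then the number of unordered pairs {j, k} of distinct indices in Fin n for which the j-th and k-th columns of X differ is at most φ_max = C(n, 2) − v·w − (2^q − 1)·C(v, 2), where C(a, 2) = a(a−1)/2 denotes the binomial coefficient (a choose 2). -/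
/-!
Joining two indices when their columns differ gives a graph which the columns themselves colour
with the `r = 2 ^ q - 1` nonzero vectors, so it contains no clique on `r + 1` vertices. By Turán's
theorem it has at most as many edges as the complete `r`-partite graph with parts of sizes `v` and
`v + 1`. The nonadjacent pairs of that graph are the pairs inside a part, and there are
`(r - w) * C(v, 2) + w * C(v + 1, 2) = v * w + r * C(v, 2)` of them.
-/

theorem card_filter_lt_and_adj {V : Type*} [Fintype V] [LinearOrder V] (G : SimpleGraph V)
    [DecidableRel G.Adj] :
    (Finset.univ.filter fun p : V × V => p.1 < p.2 ∧ G.Adj p.1 p.2).card = G.edgeFinset.card := by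
  refine Finset.card_nbij' (fun p => s(p.1, p.2)) (fun e => (e.inf, e.sup)) ?_ ?_ ?_ ?_
  · intro p hp
    simp_all
  · intro e he
    induction e with | _ a b
    have hab : G.Adj a b := by simpa using he
    rcases hab.ne.lt_or_gt with h | h
    · simp [h, h.le, hab]
    · simp [h, h.le, hab.symm]
  · intro p hp
    have h : p.1 ≤ p.2 := by simp_all [le_of_lt]
    simp [h]
  · intro e _
    induction e with | _ a b
    rcases le_total a b with h | h <;> simp [h, Sym2.eq_swap]

-- Written as a sum because the subtractions in `stmt4` are truncated.
theorem card_edgeFinset_turanGraph_add_eq_choose_two (n r : ℕ) :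
    (SimpleGraph.turanGraph n r).edgeFinset.card + n / r * (n % r) + r * (n / r).choose 2 =
      n.choose 2 := by
  rw [SimpleGraph.card_edgeFinset_turanGraph]
  rcases r with _ | s
  · simp
  have hn := Nat.div_add_mod n (s + 1)
  generalize n / (s + 1) = v at *
  generalize n % (s + 1) = w at *
  subst hn
  have hdiv : (((s + 1) * v + w) ^ 2 - w ^ 2) * s / (2 * (s + 1)) =
      v * w * s + v ^ 2 * (s + 1).choose 2 := by
    refine Nat.div_eq_of_eq_mul_right (by positivity) ?_
    rw [Nat.sq_sub_sq, Nat.add_sub_cancel]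
    qify
    simp only [Nat.cast_choose_two]
    push_cast
    ring
  rw [Nat.add_sub_cancel, hdiv]
  qify
  simp only [Nat.cast_choose_two]
  push_cast
  ring

theorem card_edgeFinset_le_of_cliqueFree {V : Type*} [Fintype V] {G : SimpleGraph V}
    [DecidableRel G.Adj] {r : ℕ} (hG : G.CliqueFree (r + 1)) :
    G.edgeFinset.card ≤
      (Fintype.card V).choose 2 - Fintype.card V / r * (Fintype.card V % r) -
        r * (Fintype.card V / r).choose 2 := by
  have hturan :
      G.edgeFinset.card ≤ (SimpleGraph.turanGraph (Fintype.card V) r).edgeFinset.card := by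
    rw [SimpleGraph.card_edgeFinset_turanGraph]
    exact hG.card_edgeFinset_le
  have hcount := card_edgeFinset_turanGraph_add_eq_choose_two (Fintype.card V) r
  omega

theorem colorable_comap_top {ι α : Type*} {f : ι → α} {S : Finset α} (hf : ∀ i, f i ∈ S) :
    ((⊤ : SimpleGraph α).comap f).Colorable S.card := by
  let C : ((⊤ : SimpleGraph α).comap f).Coloring S :=
    .mk (fun i => ⟨f i, hf i⟩) fun h => by simpa using h
  simpa using C.colorable

theorem stmt4_general {ι α : Type*} [Fintype ι] [LinearOrder ι] [DecidableEq α] (f : ι → α)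
    {S : Finset α} (hf : ∀ i, f i ∈ S) :
    (Finset.univ.filter fun p : ι × ι => p.1 < p.2 ∧ f p.1 ≠ f p.2).card ≤
      (Fintype.card ι).choose 2 - Fintype.card ι / S.card * (Fintype.card ι % S.card) -
        S.card * (Fintype.card ι / S.card).choose 2 :=
  (card_filter_lt_and_adj ((⊤ : SimpleGraph α).comap f)).trans_le
    (card_edgeFinset_le_of_cliqueFree ((colorable_comap_top hf).cliqueFree S.card.lt_succ_self))

/-- Theorem 2: the number of unordered pairs of distinct indices whose columns of the
generator matrix `X` differ (i.e. the number of estimable two-factor interactions) is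
bounded by `φ_max = C(n,2) - v·w - (2^q - 1)·C(v,2)` where `v = n / (2^q - 1)` and
`w = n % (2^q - 1)`. -/
theorem stmt4 (q n : ℕ) (hq : 1 ≤ q) (hn : 1 ≤ n)
    (X : Matrix (Fin q) (Fin n) (ZMod 2))
    (hX : ∀ j : Fin n, (fun i => X i j) ≠ 0) :
    (Finset.univ.filter
        (fun p : Fin n × Fin n =>
          p.1 < p.2 ∧ (fun i => X i p.1) ≠ (fun i => X i p.2))).card ≤
      Nat.choose n 2 - (n / (2 ^ q - 1)) * (n % (2 ^ q - 1)) -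
        (2 ^ q - 1) * Nat.choose (n / (2 ^ q - 1)) 2 := by
  have hcard : ((Finset.univ : Finset (Fin q → ZMod 2)).erase 0).card = 2 ^ q - 1 := by simp
  simpa [hcard] using
    stmt4_general (fun j i => X i j) (S := Finset.univ.erase 0) (by simpa using hX)
end

section
/- Let α be a nonempty finite type with M = Fintype.card α, let m : α → ℕ with ∑_{a} m a = n, and set v = n / M (integer division) and w = n % M. Then the sum over unordered pairs {a, b} of distinct elements of α of m a · m b (equivalently, half of ∑_{(a,b) ∈ offDiag} m a · m b) is at most C(n, 2) − v·w − M·C(v, 2), with equality if and only if m a ∈ {v, v + 1} for every a : α (in which case exactly w elements a have m a = v + 1). Here C(a, 2) = a(a−1)/2. -/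
/-!
Splitting all pairs of columns by whether their values agree gives
`∑_{a ≠ b} m a * m b + 2 * ∑ a, C(m a, 2) = 2 * C(n, 2)`, so the first sum is largest when
`∑ a, C(m a, 2)` is smallest. The function `C(·, 2)` is discretely convex: it lies above its chord
`C(v, 2) + v * (k - v)` through `v` and `v + 1`, and meets it only at these two points. Summing over
all `a` turns the chord into `M * C(v, 2) + v * w`. In particular
`M * C(v, 2) + v * w ≤ C(n, 2)`, so the subtractions in the theorem do not truncate.
-/

open Finset

theorem two_mul_choose_two_add_self (k : ℕ) : 2 * k.choose 2 + k = k * k := by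
  induction k with
  | zero => rfl
  | succ k ih =>
    have hsucc : (k + 1).choose 2 = k + k.choose 2 := by
      rw [Nat.choose_succ_succ' k 1, Nat.choose_one_right]
    linarith

theorem two_mul_choose_two_sub_chord (v k : ℕ) :
    2 * (((k.choose 2 + v * v : ℕ) : ℤ) - (v.choose 2 + v * k : ℕ)) =
      ((k : ℤ) - v) * ((k : ℤ) - v - 1) := by
  have hk : (2 * k.choose 2 + k : ℤ) = k * k := mod_cast two_mul_choose_two_add_self k
  have hv : (2 * v.choose 2 + v : ℤ) = v * v := mod_cast two_mul_choose_two_add_self v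
  push_cast
  linear_combination hk - hv

theorem choose_two_add_mul_le (v k : ℕ) : v.choose 2 + v * k ≤ k.choose 2 + v * v := by
  have hgap := two_mul_choose_two_sub_chord v k
  have hnonneg : (k : ℤ) - v ≤ ((k : ℤ) - v) ^ 2 := Int.le_self_sq _
  zify at hgap ⊢
  linarith

theorem choose_two_add_mul_eq_iff (v k : ℕ) :
    v.choose 2 + v * k = k.choose 2 + v * v ↔ k = v ∨ k = v + 1 := by
  have hgap := two_mul_choose_two_sub_chord v k
  calc v.choose 2 + v * k = k.choose 2 + v * v
      ↔ ((k : ℤ) - v) * ((k : ℤ) - v - 1) = 0 := by rw [← hgap]; omega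
    _ ↔ k = v ∨ k = v + 1 := by rw [mul_eq_zero]; omega

section Sums

variable {ι : Type*} (s : Finset ι)

theorem sum_mul_add_sum_offDiag_mul {R : Type*} [NonUnitalNonAssocSemiring R]
    (f g : ι → R) :
    ∑ a ∈ s, f a * g a + ∑ p ∈ s.offDiag, f p.1 * g p.2 = (∑ a ∈ s, f a) * ∑ a ∈ s, g a := by
  classical
  rw [sum_mul_sum, ← sum_product', ← diag_union_offDiag, sum_union (disjoint_diag_offDiag s),
    sum_diag]

theorem sum_offDiag_mul_add_two_mul_sum_choose_two (m : ι → ℕ) :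
    ∑ p ∈ s.offDiag, m p.1 * m p.2 + 2 * ∑ a ∈ s, (m a).choose 2 =
      2 * (∑ a ∈ s, m a).choose 2 := by
  have hdiag : 2 * ∑ a ∈ s, (m a).choose 2 + ∑ a ∈ s, m a = ∑ a ∈ s, m a * m a := by
    simp only [mul_sum, ← sum_add_distrib, two_mul_choose_two_add_self]
  have hsquare := sum_mul_add_sum_offDiag_mul s m m
  have htotal := two_mul_choose_two_add_self (∑ a ∈ s, m a)
  linarith

variable {s} {m : ι → ℕ} {v w : ℕ}

theorem sum_choose_two_add_mul (hm : ∑ a ∈ s, m a = #s * v + w) :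
    ∑ a ∈ s, (v.choose 2 + v * m a) = #s * v.choose 2 + v * w + #s * (v * v) := by
  rw [sum_add_distrib, sum_const, smul_eq_mul, ← mul_sum, hm]
  ring

theorem card_mul_choose_two_add_le_sum_choose_two (hm : ∑ a ∈ s, m a = #s * v + w) :
    #s * v.choose 2 + v * w ≤ ∑ a ∈ s, (m a).choose 2 := by
  have hsum := sum_le_sum fun a (_ : a ∈ s) => choose_two_add_mul_le v (m a)
  rw [sum_choose_two_add_mul hm, sum_add_distrib, sum_const, smul_eq_mul] at hsum
  exact Nat.le_of_add_le_add_right hsum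

theorem card_mul_choose_two_add_eq_sum_choose_two_iff (hm : ∑ a ∈ s, m a = #s * v + w) :
    #s * v.choose 2 + v * w = ∑ a ∈ s, (m a).choose 2 ↔ ∀ a ∈ s, m a = v ∨ m a = v + 1 := by
  have hsum := sum_eq_sum_iff_of_le fun a (_ : a ∈ s) => choose_two_add_mul_le v (m a)
  rw [sum_choose_two_add_mul hm, sum_add_distrib, sum_const, smul_eq_mul,
    Nat.add_right_cancel_iff] at hsum
  simpa only [choose_two_add_mul_eq_iff] using hsum

theorem sum_eq_card_mul_add_card_filter (h : ∀ a ∈ s, m a = v ∨ m a = v + 1) :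
    ∑ a ∈ s, m a = #s * v + #{a ∈ s | m a = v + 1} := by
  have hterm : ∀ a ∈ s, m a = v + if m a = v + 1 then 1 else 0 := fun a ha => by
    have := h a ha
    split_ifs <;> omega
  rw [sum_congr rfl hterm, sum_add_distrib, sum_const, smul_eq_mul, card_filter]

end Sums

/-- The counting principle underlying the bound `φ_max`: for multiplicities `m a`
summing to `n` over a finite type `α` of cardinality `M`, the sum over unordered pairs
of distinct elements of `m a · m b` (i.e. half of the off-diagonal sum) is at most
`C(n,2) - v·w - M·C(v,2)` with `v = n / M`, `w = n % M`, with equality iff every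
`m a ∈ {v, v+1}`; in that case exactly `w` elements have `m a = v + 1`. -/
theorem stmt5 (α : Type*) [Fintype α] [DecidableEq α] [Nonempty α]
    (M n : ℕ) (hM : M = Fintype.card α)
    (m : α → ℕ) (hm : ∑ a : α, m a = n) :
    (∑ p ∈ Finset.univ.offDiag, m p.1 * m p.2) ≤
        2 * (Nat.choose n 2 - (n / M) * (n % M) - M * Nat.choose (n / M) 2) ∧
    ((∑ p ∈ Finset.univ.offDiag, m p.1 * m p.2) =
        2 * (Nat.choose n 2 - (n / M) * (n % M) - M * Nat.choose (n / M) 2) ↔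
      ∀ a : α, m a = n / M ∨ m a = n / M + 1) ∧
    ((∀ a : α, m a = n / M ∨ m a = n / M + 1) →
      (Finset.univ.filter (fun a : α => m a = n / M + 1)).card = n % M) := by
  subst hM
  set v := n / Fintype.card α
  set w := n % Fintype.card α
  have hdiv : ∑ a, m a = #(univ : Finset α) * v + w := by rw [hm, card_univ, Nat.div_add_mod]
  have hpairs := sum_offDiag_mul_add_two_mul_sum_choose_two univ m
  have hle := card_mul_choose_two_add_le_sum_choose_two hdiv
  have hiff := card_mul_choose_two_add_eq_sum_choose_two_iff hdiv
  simp only [card_univ, hm, mem_univ, forall_true_left] at hdiv hpairs hle hiff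
  refine ⟨by omega, ?_, fun hbal => ?_⟩
  · rw [← hiff]
    omega
  · have hcount := sum_eq_card_mul_add_card_filter fun a (_ : a ∈ univ) => hbal a
    rw [card_univ] at hcount
    omega
end

section
/- Let q ≥ 1 and n > 2^q − 1, and let X : Matrix (Fin q) (Fin n) (ZMod 2) be a matrix all of whose columns are nonzero. Write v = n / (2^q − 1) and w = n % (2^q − 1). Then the number of unordered pairs {j, k} of distinct indices with differing columns of X equals φ_max = C(n, 2) − v·w − (2^q − 1)·C(v, 2) if and only if the multiset of columns of X consists of v + 1 copies of each of w distinct nonzero vectors in Fin q → ZMod 2 and v copies of each of the remaining 2^q − 1 − w nonzero vectors; that is, for every nonzero c : Fin q → ZMod 2, the number of j with column j equal to c is v or v + 1, and the number of such c with multiplicity v + 1 is exactly w. -/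
/-!
Let `μ c` be the number of indices coloured `c`. Among all `C(n, 2)` pairs of indices, the pairs of
equal colour number `∑ C(μ c, 2)`. Since `C(a, 2)` is convex in `a`, at integers it lies on or above
its secant through `v` and `v + 1`, the line `C(v, 2) + v (a - v)`, and it meets this line at
`a = v` and `a = v + 1` only. Summing over the `m` colours, with `n = m v + w`, gives
`∑ C(μ c, 2) ≥ v w + m C(v, 2)`, with equality exactly when every `μ c` is `v` or `v + 1`; the
number of colours with `μ c = v + 1` is then `n - m v = w`. For `stmt6` the colour of `j` is
the `j`-th column of `X`, one of `m = 2 ^ q - 1` nonzero vectors.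
-/

open Finset

section Convexity

lemma two_mul_choose_two_sub_secant (a v : ℕ) :
    2 * (((a.choose 2 + v ^ 2 : ℕ) : ℤ) - (v * a + v.choose 2 : ℕ)) = (a - v) * (a - v - 1) := by
  have h : 2 * (((a.choose 2 + v ^ 2 : ℕ) : ℚ) - (v * a + v.choose 2 : ℕ)) =
      (a - v) * (a - v - 1) := by
    push_cast [Nat.cast_choose_two]
    ring
  exact_mod_cast h

-- The secant inequality `C(v, 2) + v (a - v) ≤ C(a, 2)`, rearranged so that no subtraction occurs.
lemma mul_add_choose_two_le (a v : ℕ) : v * a + v.choose 2 ≤ a.choose 2 + v ^ 2 := by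
  have h := two_mul_choose_two_sub_secant a v
  have hconsec : 0 ≤ ((a : ℤ) - v) * (a - v - 1) := by
    linarith [Int.le_self_sq ((a : ℤ) - v)]
  lia

lemma mul_add_choose_two_eq_iff (a v : ℕ) :
    v * a + v.choose 2 = a.choose 2 + v ^ 2 ↔ a = v ∨ a = v + 1 := by
  have h := two_mul_choose_two_sub_secant a v
  calc v * a + v.choose 2 = a.choose 2 + v ^ 2
      ↔ ((a : ℤ) - v) * (a - v - 1) = 0 := by rw [← h]; lia
    _ ↔ a = v ∨ a = v + 1 := by rw [mul_eq_zero]; lia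

end Convexity

section Multiplicities

variable {α : Type*} {S : Finset α} {μ : α → ℕ} {v w : ℕ}

lemma sum_mul_add_choose_two (hsum : ∑ c ∈ S, μ c = #S * v + w) :
    ∑ c ∈ S, (v * μ c + v.choose 2) = v * w + #S * v.choose 2 + #S * v ^ 2 := by
  rw [sum_add_distrib, ← mul_sum, hsum, sum_const, smul_eq_mul]
  ring

lemma sum_choose_two_add_sq :
    ∑ c ∈ S, ((μ c).choose 2 + v ^ 2) = ∑ c ∈ S, (μ c).choose 2 + #S * v ^ 2 := by
  rw [sum_add_distrib, sum_const, smul_eq_mul]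

lemma mul_add_card_mul_choose_two_le_sum (hsum : ∑ c ∈ S, μ c = #S * v + w) :
    v * w + #S * v.choose 2 ≤ ∑ c ∈ S, (μ c).choose 2 := by
  have h := sum_le_sum fun c (_ : c ∈ S) => mul_add_choose_two_le (μ c) v
  rw [sum_mul_add_choose_two hsum, sum_choose_two_add_sq] at h
  exact Nat.le_of_add_le_add_right h

lemma mul_add_card_mul_choose_two_eq_sum_iff (hsum : ∑ c ∈ S, μ c = #S * v + w) :
    v * w + #S * v.choose 2 = ∑ c ∈ S, (μ c).choose 2 ↔ ∀ c ∈ S, μ c = v ∨ μ c = v + 1 := by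
  have h := sum_eq_sum_iff_of_le fun c (_ : c ∈ S) => mul_add_choose_two_le (μ c) v
  rw [sum_mul_add_choose_two hsum, sum_choose_two_add_sq, Nat.add_right_cancel_iff] at h
  simpa only [mul_add_choose_two_eq_iff] using h

lemma card_filter_eq_add_one (hsum : ∑ c ∈ S, μ c = #S * v + w)
    (hμ : ∀ c ∈ S, μ c = v ∨ μ c = v + 1) : #{c ∈ S | μ c = v + 1} = w := by
  have h : ∑ c ∈ S, μ c = #S * v + #{c ∈ S | μ c = v + 1} := by
    calc ∑ c ∈ S, μ c = ∑ c ∈ S, (v + if μ c = v + 1 then 1 else 0) :=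
          sum_congr rfl fun c hc => by rcases hμ c hc with hc | hc <;> simp [hc]
      _ = #S * v + #{c ∈ S | μ c = v + 1} := by
          rw [sum_add_distrib, sum_const, smul_eq_mul, ← card_filter]
  lia

end Multiplicities

section Pairs

variable {ι α : Type*} [Fintype ι] [DecidableEq α] {S : Finset α} {f : ι → α}

lemma sum_card_fiber_eq_card (hf : ∀ j, f j ∈ S) : ∑ c ∈ S, #{j | f j = c} = Fintype.card ι :=
  (card_eq_sum_card_fiberwise fun j _ => hf j).symm

variable [LinearOrder ι]

lemma card_filter_lt_and_apply_eq (hf : ∀ j, f j ∈ S) :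
    #{p : ι × ι | p.1 < p.2 ∧ f p.1 = f p.2} = ∑ c ∈ S, (#{j | f j = c}).choose 2 := by
  rw [card_eq_sum_card_fiberwise (f := fun p => f p.1) (t := S) fun p _ => hf p.1]
  refine sum_congr rfl fun c _ => ?_
  calc #{p ∈ {p : ι × ι | p.1 < p.2 ∧ f p.1 = f p.2} | f p.1 = c}
      = #{p ∈ univ.filter (f · = c) ×ˢ univ.filter (f · = c) | p.1 < p.2} := by congr 1; grind
    _ = (#{j | f j = c}).choose 2 := card_product_filter_lt

lemma card_filter_lt_and_apply_ne_add_sum_choose_two (hf : ∀ j, f j ∈ S) :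
    #{p : ι × ι | p.1 < p.2 ∧ f p.1 ≠ f p.2} + ∑ c ∈ S, (#{j | f j = c}).choose 2 =
      (Fintype.card ι).choose 2 := by
  rw [← card_filter_lt_and_apply_eq hf, ← Fintype.card_product_filter_lt, add_comm,
    ← filter_filter, ← filter_filter]
  exact card_filter_add_card_filter_not _

end Pairs

theorem stmt6_general {ι α : Type*} [Fintype ι] [LinearOrder ι] [DecidableEq α] (S : Finset α)
    (f : ι → α) {v w : ℕ} (hf : ∀ j, f j ∈ S) (hcard : #S * v + w = Fintype.card ι) :
    #{p : ι × ι | p.1 < p.2 ∧ f p.1 ≠ f p.2} =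
        (Fintype.card ι).choose 2 - v * w - #S * v.choose 2 ↔
      (∀ c ∈ S, #{j | f j = c} = v ∨ #{j | f j = c} = v + 1) ∧
        #{c ∈ S | #{j | f j = c} = v + 1} = w := by
  have hsum : ∑ c ∈ S, #{j | f j = c} = #S * v + w := (sum_card_fiber_eq_card hf).trans hcard.symm
  have hpairs := card_filter_lt_and_apply_ne_add_sum_choose_two hf
  -- This bound also shows that the subtractions from `C(n, 2)` do not truncate.
  have hle := mul_add_card_mul_choose_two_le_sum hsum
  rw [and_iff_left_of_imp (card_filter_eq_add_one hsum),
    ← mul_add_card_mul_choose_two_eq_sum_iff hsum]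
  lia

/-- Corollary 3 (case `n > 2^q - 1`): the number of unordered pairs of distinct
columns of the generator matrix `X` achieves the bound `φ_max` iff the multiset of
columns consists of `v + 1` copies of each of `w` nonzero vectors and `v` copies of
each of the remaining `2^q - 1 - w` nonzero vectors, where `v = n / (2^q - 1)` and
`w = n % (2^q - 1)`. -/
theorem stmt6 (q n : ℕ) (hq : 1 ≤ q) (hn : 2 ^ q - 1 < n)
    (X : Matrix (Fin q) (Fin n) (ZMod 2))
    (hX : ∀ j : Fin n, (fun i => X i j) ≠ 0) :
    (Finset.univ.filter
        (fun p : Fin n × Fin n =>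
          p.1 < p.2 ∧ (fun i => X i p.1) ≠ (fun i => X i p.2))).card =
      Nat.choose n 2 - (n / (2 ^ q - 1)) * (n % (2 ^ q - 1)) -
        (2 ^ q - 1) * Nat.choose (n / (2 ^ q - 1)) 2 ↔
    ((∀ c : Fin q → ZMod 2, c ≠ 0 →
        (Finset.univ.filter (fun j : Fin n => (fun i => X i j) = c)).card = n / (2 ^ q - 1) ∨
        (Finset.univ.filter (fun j : Fin n => (fun i => X i j) = c)).card = n / (2 ^ q - 1) + 1) ∧
      (Finset.univ.filter (fun c : Fin q → ZMod 2 => c ≠ 0 ∧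
        (Finset.univ.filter (fun j : Fin n => (fun i => X i j) = c)).card =
          n / (2 ^ q - 1) + 1)).card = n % (2 ^ q - 1)) := by
  have hcard : #{c : Fin q → ZMod 2 | c ≠ 0} = 2 ^ q - 1 := by simp [filter_ne']
  simpa [hcard, filter_filter] using stmt6_general {c | c ≠ 0} (fun j i => X i j)
    (by simpa using hX) (by rw [hcard, Nat.div_add_mod, Fintype.card_fin])
end

section
/- Let 1 ≤ q ≤ n and let G be a simple graph on Fin n (the requirements graph). Then there exists a matrix X : Matrix (Fin q) (Fin n) (ZMod 2) of rank q such that every column of X is nonzero and such that for all j, k with G.Adj j k the j-th and k-th columns of X differ, if and only if G is (2^q − 1)-colorable (i.e., G has chromatic number at most 2^q − 1). -/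
/-!
A matrix over `K` with nonzero columns that separates adjacent vertices is a proper coloring by the
nonzero vectors of `K ^ m`, so only the rank condition needs an argument. Among these colorings,
take one whose colors span a maximal subspace `W`. If `W` were proper, then `dim W < |m| ≤ |V|`, so
some vertex has a color in the span of the colors of the other vertices. Recoloring this vertex by
a vector outside `W` keeps the coloring proper, since the new color was unused, and strictly
enlarges the span: a contradiction.
-/

open Module Submodule

section Span

lemma span_range_lt_span_range_update {ι R M : Type*} [DecidableEq ι] [Semiring R]
    [AddCommMonoid M] [Module R M] {f : ι → M} {i : ι} {u : M}
    (hi : f i ∈ span R (f '' (Set.univ \ {i}))) (hu : u ∉ span R (Set.range f)) :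
    span R (Set.range f) < span R (Set.range (Function.update f i u)) := by
  have others_le : span R (f '' (Set.univ \ {i})) ≤
      span R (Set.range (Function.update f i u)) := by
    refine span_mono ?_
    rintro _ ⟨j, ⟨-, hj⟩, rfl⟩
    exact ⟨j, Function.update_of_ne hj u f⟩
  have le_others : span R (Set.range f) ≤ span R (f '' (Set.univ \ {i})) := by
    rw [span_le]
    rintro _ ⟨j, rfl⟩
    obtain rfl | hj := eq_or_ne j i
    · exact hi
    · exact subset_span ⟨j, ⟨Set.mem_univ j, hj⟩, rfl⟩
  have u_mem : u ∈ span R (Set.range (Function.update f i u)) :=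
    subset_span ⟨i, Function.update_self i u f⟩
  exact SetLike.lt_iff_le_and_exists.2 ⟨le_others.trans others_le, u, u_mem, hu⟩

lemma span_range_eq_top_of_finrank_le_card {ι K E : Type*} [DivisionRing K] [AddCommGroup E]
    [Module K E] [FiniteDimensional K E] {f : ι → E} (hf : LinearIndependent K f)
    (hcard : (finrank K E : ℕ∞) ≤ ENat.card ι) : span K (Set.range f) = ⊤ := by
  have : Finite ι := hf.finite
  have : Fintype ι := Fintype.ofFinite ι
  rw [ENat.card_eq_coe_fintype_card, Nat.cast_le] at hcard
  exact hf.span_eq_top_of_card_eq_finrank' (hf.fintype_card_le_finrank.antisymm hcard)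

end Span

section Coloring

variable {V : Type*} {G : SimpleGraph V}

/-- The coloring obtained from `C` by giving the vertex `v` a color `a` that `C` does not use;
it is the operation by which the span of a coloring by vectors is enlarged. -/
def recolorVertex {α : Type*} [DecidableEq V] (C : G.Coloring α) (v : V) {a : α}
    (ha : a ∉ Set.range C) : G.Coloring α :=
  .mk (Function.update C v a) fun {w x} hwx ↦ by
    have ne_a (y : V) : C y ≠ a := fun h ↦ ha ⟨y, h⟩
    obtain rfl | hw := eq_or_ne w v
    · simpa [hwx.ne'] using (ne_a x).symm
    obtain rfl | hx := eq_or_ne x v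
    · simpa [hw] using ne_a w
    · simpa [hw, hx] using C.valid hwx

variable {K E : Type*} [DivisionRing K] [AddCommGroup E] [Module K E] [FiniteDimensional K E]

lemma exists_coloring_span_lt (hcard : (finrank K E : ℕ∞) ≤ ENat.card V)
    (C : G.Coloring {x : E // x ≠ 0}) (hC : span K (Set.range fun v ↦ (C v : E)) ≠ ⊤) :
    ∃ C' : G.Coloring {x : E // x ≠ 0},
      span K (Set.range fun v ↦ (C v : E)) < span K (Set.range fun v ↦ (C' v : E)) := by
  classical
  obtain ⟨u, hu⟩ : ∃ u, u ∉ span K (Set.range fun v ↦ (C v : E)) := by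
    simpa [eq_top_iff'] using hC
  obtain ⟨v, hv⟩ : ∃ v, (C v : E) ∈ span K ((fun w ↦ (C w : E)) '' (Set.univ \ {v})) := by
    simpa [linearIndependent_iff_notMem_span] using
      mt (span_range_eq_top_of_finrank_le_card · hcard) hC
  have hu₀ : u ≠ 0 := (ne_of_mem_of_not_mem (zero_mem _) hu).symm
  have unused : (⟨u, hu₀⟩ : {x : E // x ≠ 0}) ∉ Set.range C := by
    rintro ⟨w, hw⟩
    exact hu (subset_span ⟨w, congrArg Subtype.val hw⟩)
  have coe_recolor : (fun w ↦ (recolorVertex C v unused w : E)) =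
      Function.update (fun w ↦ (C w : E)) v u :=
    Function.comp_update Subtype.val C v ⟨u, hu₀⟩
  refine ⟨recolorVertex C v unused, ?_⟩
  rw [coe_recolor]
  exact span_range_lt_span_range_update hv hu

lemma exists_coloring_span_eq_top (hcard : (finrank K E : ℕ∞) ≤ ENat.card V)
    (hG : Nonempty (G.Coloring {x : E // x ≠ 0})) :
    ∃ C : G.Coloring {x : E // x ≠ 0}, span K (Set.range fun v ↦ (C v : E)) = ⊤ := by
  obtain ⟨_, ⟨C, rfl⟩, hmax⟩ := wellFounded_gt.has_min
    (Set.range fun C : G.Coloring {x : E // x ≠ 0} ↦ span K (Set.range fun v ↦ (C v : E)))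
    (Set.range_nonempty _)
  refine ⟨C, by_contra fun hC ↦ ?_⟩
  obtain ⟨C', hlt⟩ := exists_coloring_span_lt hcard C hC
  exact hmax _ ⟨C', rfl⟩ hlt

end Coloring

section Matrix

lemma eRank_eq_card_of_span_col_eq_top {m n R : Type*} [Fintype m] [Semiring R]
    [StrongRankCondition R] {X : Matrix m n R} (hX : span R (Set.range X.col) = ⊤) :
    X.eRank = Fintype.card m := by
  rw [Matrix.eRank, Matrix.cRank, hX, rank_top, rank_fun', map_natCast]

lemma natCast_rank_eq_eRank {m n R : Type*} [Fintype n] [CommSemiring R] [StrongRankCondition R]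
    (X : Matrix m n R) : (X.rank : ℕ∞) = X.eRank := by
  rw [← X.eRank_toNat_eq_rank]
  exact ENat.natCast_toNat (ne_top_of_le_ne_top (by simp) X.eRank_le_card_width)

variable {m V K : Type*} [Fintype m] {G : SimpleGraph V}

theorem exists_eRank_eq_card_iff_nonempty_coloring [DivisionRing K]
    (hcard : (Fintype.card m : ℕ∞) ≤ ENat.card V) :
    (∃ X : Matrix m V K, X.eRank = Fintype.card m ∧
      (∀ j, (fun i ↦ X i j) ≠ 0) ∧
      (∀ j k, G.Adj j k → (fun i ↦ X i j) ≠ (fun i ↦ X i k))) ↔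
    Nonempty (G.Coloring {x : m → K // x ≠ 0}) := by
  constructor
  · rintro ⟨X, -, hne, hadj⟩
    exact ⟨.mk (fun j ↦ ⟨fun i ↦ X i j, hne j⟩)
      fun {j k} hjk heq ↦ hadj j k hjk (congrArg Subtype.val heq)⟩
  · intro hG
    obtain ⟨C, hC⟩ := exists_coloring_span_eq_top (K := K)
      (by rwa [finrank_fintype_fun_eq_card]) hG
    exact ⟨.of fun i j ↦ (C j : m → K) i, eRank_eq_card_of_span_col_eq_top hC,
      fun j ↦ (C j).2, fun j k hjk heq ↦ C.valid hjk (Subtype.ext heq)⟩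

lemma card_nonzero_vectors [Zero K] [Fintype K] [Fintype {x : m → K // x ≠ 0}] :
    Fintype.card {x : m → K // x ≠ 0} = Fintype.card K ^ Fintype.card m - 1 := by
  classical
  rw [Fintype.card_subtype_compl, Fintype.card_fun, Fintype.card_subtype_eq]

theorem stmt7_general [DivisionRing K] [Fintype K] (hcard : (Fintype.card m : ℕ∞) ≤ ENat.card V) :
    (∃ X : Matrix m V K, X.eRank = Fintype.card m ∧
      (∀ j, (fun i ↦ X i j) ≠ 0) ∧
      (∀ j k, G.Adj j k → (fun i ↦ X i j) ≠ (fun i ↦ X i k))) ↔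
    G.Colorable (Fintype.card K ^ Fintype.card m - 1) := by
  classical
  rw [exists_eRank_eq_card_iff_nonempty_coloring hcard, ← card_nonzero_vectors]
  exact ⟨fun ⟨C⟩ ↦ C.colorable, fun hG ↦ ⟨hG.toColoring le_rfl⟩⟩

end Matrix

/-- Lemma 1: a `2^n` factorial in blocks of size `2^q` estimating all main effects and
all interactions of a requirements graph `G` exists (i.e. there is a rank-`q` generator
matrix with nonzero columns in which adjacent vertices receive distinct columns) iff
`G` is `(2^q - 1)`-colorable. -/
theorem stmt7 (q n : ℕ) (hq : 1 ≤ q) (hqn : q ≤ n) (G : SimpleGraph (Fin n)) :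
    (∃ X : Matrix (Fin q) (Fin n) (ZMod 2),
      X.rank = q ∧
      (∀ j : Fin n, (fun i => X i j) ≠ 0) ∧
      (∀ j k : Fin n, G.Adj j k → (fun i => X i j) ≠ (fun i => X i k))) ↔
    G.Colorable (2 ^ q - 1) := by
  simpa [← natCast_rank_eq_eRank] using
    stmt7_general (m := Fin q) (K := ZMod 2) (G := G) (by simpa using hqn)
end

section
/- Let 1 ≤ q ≤ n and let G be a simple graph on Fin n. Suppose at least one of the following holds: (i) every vertex of G has degree at most 2^q − 1 and G contains no clique on 2^q vertices (G.CliqueFree (2^q)); (ii) the number of vertices of G of degree at least 2^q − 1 is at most 2^q − 1. Then there exists a matrix X : Matrix (Fin q) (Fin n) (ZMod 2) of rank q such that every column of X is nonzero and for all j, k with G.Adj j k the j-th and k-th columns of X differ. (Equivalently, a 2^n factorial in blocks of size 2^q exists from which all main effects and all interactions of G are estimable.) -/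
/-!
A matrix with nonzero columns in which adjacent vertices receive distinct columns is a proper
colouring by the nonzero vectors, so what is needed is a proper colouring with `k = |K| ^ |ι| - 1`
colours whose colours span. The spanning condition is free: while the columns are dependent without
spanning, replace a redundant column by a vector outside their span; the new column is nonzero and
differs from all the others.

If at most `k` vertices have degree at least `k`, give these distinct colours and colour the others
greedily. If the maximum degree is at most `k` and there is no `(k + 1)`-clique, this is Brooks'
theorem (for `k ≠ 2`), proved along the lines of Zając's short proof. Its engine is that a colouring
extends to a connected set `W` if some `b ∈ W` has two neighbours outside `W` of the same colour:
colour `W` towards `b`. Let `S` be minimal without a `k`-colouring. Choose `v ∈ S` with nonadjacent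
neighbours `x` and `y`, and extend the path `y, v, x` backwards from `y` as far as possible, to `z`.
All neighbours of `z` lie on the path, hence on a cycle `C` through `z`. If `C ≠ S`, colour `S \ C`,
and take consecutive `a, b` on `C` such that only `b` has a neighbour `u` in `S \ C`; giving `a` the
colour of `u`, the colouring extends to `C \ {a}`. So `C = S` and the path spans `S`; then
`S \ {x, y}` is connected, because `v` has a third neighbour, and a colouring in which `x` and `y`
agree extends to it.
-/

open SimpleGraph

section Coloring

variable {V α : Type*} {G : SimpleGraph V}

lemma ncard_neighborSet [G.LocallyFinite] (x : V) :
    (G.neighborSet x).ncard = G.degree x := by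
  rw [← Nat.card_coe_set_eq, Nat.card_eq_fintype_card, G.card_neighborSet_eq_degree]

lemma exists_adj_dist_lt {u v : V} (h : G.Reachable u v) (hne : u ≠ v) :
    ∃ w, G.Adj u w ∧ G.dist w v < G.dist u v := by
  obtain ⟨p, hp⟩ := h.exists_walk_length_eq_dist
  cases p with
  | nil => exact absurd rfl hne
  | cons huw p =>
    rw [Walk.length_cons] at hp
    exact ⟨_, huw, by have := dist_le p; omega⟩

/-- `c` is a proper colouring of the vertices in `S`; its values outside `S` are irrelevant. -/
def IsProperOn (G : SimpleGraph V) (c : V → α) (S : Set V) : Prop :=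
  ∀ ⦃u⦄, u ∈ S → ∀ ⦃v⦄, v ∈ S → G.Adj u v → c u ≠ c v

namespace IsProperOn

lemma insert_update [DecidableEq V] {c : V → α} {S : Set V} (hc : IsProperOn G c S) {x : V}
    (hx : x ∉ S) {a : α} (ha : ∀ u ∈ S, G.Adj x u → c u ≠ a) :
    IsProperOn G (Function.update c x a) (insert x S) := by
  have update_eq : ∀ u ∈ S, Function.update c x a u = c u := fun u hu =>
    Function.update_of_ne (ne_of_mem_of_not_mem hu hx) _ _
  rintro u (rfl | hu) v (rfl | hv) huv
  · exact absurd rfl huv.ne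
  · rw [Function.update_self, update_eq v hv]
    exact (ha v hv huv).symm
  · rw [Function.update_self, update_eq u hu]
    exact ha u hu huv.symm
  · rw [update_eq u hu, update_eq v hv]
    exact hc hu hv huv

lemma union {c d : V → α} {S T : Set V} (hc : IsProperOn G c S) (hd : IsProperOn G d T)
    (hST : ∀ u ∈ S, ∀ v ∈ T, ¬ G.Adj u v) : ∃ e : V → α, IsProperOn G e (S ∪ T) := by
  classical
  refine ⟨S.piecewise c d, ?_⟩
  rintro u hu v hv huv
  by_cases huS : u ∈ S <;> by_cases hvS : v ∈ S <;>
    simp only [Set.piecewise, huS, hvS, if_true, if_false]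
  · exact hc huS hvS huv
  · exact absurd huv (hST u huS v (hv.resolve_left hvS))
  · exact absurd huv.symm (hST v hvS u (hu.resolve_left huS))
  · exact hd (hu.resolve_left huS) (hv.resolve_left hvS) huv

lemma exists_insert {k : ℕ} {c : V → Fin k} {S : Set V} (hc : IsProperOn G c S) {x : V}
    (hx : x ∉ S) (hk : (c '' (G.neighborSet x ∩ S)).ncard < k) :
    ∃ c' : V → Fin k, Set.EqOn c' c S ∧ IsProperOn G c' (insert x S) := by
  classical
  obtain ⟨a, ha⟩ : ∃ a, a ∉ c '' (G.neighborSet x ∩ S) := by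
    by_contra! h
    rw [Set.eq_univ_of_forall h, Set.ncard_univ, Nat.card_fin] at hk
    exact hk.false
  exact ⟨Function.update c x a,
    fun u hu => Function.update_of_ne (ne_of_mem_of_not_mem hu hx) _ _,
    hc.insert_update hx fun u hu hxu hua => ha ⟨u, ⟨hxu, hu⟩, hua⟩⟩

variable [G.LocallyFinite] {k : ℕ} {c : V → Fin k} {S : Set V}

lemma exists_insert_of_degree_lt (hc : IsProperOn G c S) {x : V} (hx : x ∉ S)
    (hk : G.degree x < k) :
    ∃ c' : V → Fin k, Set.EqOn c' c S ∧ IsProperOn G c' (insert x S) := by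
  refine hc.exists_insert hx (lt_of_le_of_lt ?_ hk)
  rw [← ncard_neighborSet]
  exact (Set.ncard_image_le ((Set.toFinite _).inter_of_left S)).trans
    (Set.ncard_inter_le_ncard_left _ _ (Set.toFinite _))

lemma exists_insert_of_redundant_neighbor (hc : IsProperOn G c S) {x y : V} (hx : x ∉ S)
    (hk : G.degree x ≤ k) (hxy : G.Adj x y) (hy : y ∈ S → ∃ w ≠ y, G.Adj x w ∧ c w = c y) :
    ∃ c' : V → Fin k, Set.EqOn c' c S ∧ IsProperOn G c' (insert x S) := by
  have hsub : c '' (G.neighborSet x ∩ S) ⊆ c '' (G.neighborSet x \ {y}) := by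
    rintro _ ⟨u, ⟨hxu, hu⟩, rfl⟩
    by_cases huy : u = y
    · subst huy
      obtain ⟨w, hwu, hxw, hcw⟩ := hy hu
      exact ⟨w, ⟨hxw, hwu⟩, hcw⟩
    · exact ⟨u, ⟨hxu, huy⟩, rfl⟩
  refine hc.exists_insert hx ?_
  calc (c '' (G.neighborSet x ∩ S)).ncard
      ≤ (c '' (G.neighborSet x \ {y})).ncard := Set.ncard_le_ncard hsub
    _ ≤ (G.neighborSet x \ {y}).ncard := Set.ncard_image_le (Set.toFinite _)
    _ < (G.neighborSet x).ncard := Set.ncard_sdiff_singleton_lt_of_mem hxy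
    _ ≤ k := (ncard_neighborSet x).trans_le hk

lemma exists_union_of_descent {β : Type*} [LinearOrder β] (hc : IsProperOn G c S)
    (hdeg : ∀ v, G.degree v ≤ k) (f : V → β) (T : Finset V)
    (hT : ∀ v ∈ T, v ∉ S ∧ ∃ w, G.Adj v w ∧ w ∉ S ∧ f w < f v) :
    ∃ c' : V → Fin k, Set.EqOn c' c S ∧ IsProperOn G c' (S ∪ T) := by
  classical
  induction T using Finset.induction_on_min_value f with
  | empty => exact ⟨c, Set.eqOn_refl c S, by simpa using hc⟩
  | insert x T hxT hmin ih =>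
    obtain ⟨c₁, hc₁S, hc₁⟩ := ih fun v hv => hT v (Finset.mem_insert_of_mem hv)
    obtain ⟨hxS, w, hxw, hwS, hfw⟩ := hT x (Finset.mem_insert_self x T)
    have hwT : w ∉ T := fun hw => (hmin w hw).not_gt hfw
    obtain ⟨c₂, hc₂S, hc₂⟩ := hc₁.exists_insert_of_redundant_neighbor (x := x) (y := w)
      (by simp [hxS, hxT]) (hdeg x) hxw (by simp [hwS, hwT])
    refine ⟨c₂, (hc₂S.mono Set.subset_union_left).trans hc₁S, ?_⟩
    rwa [Finset.coe_insert, Set.union_insert]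

lemma exists_union_of_preconnected (hc : IsProperOn G c S) (hdeg : ∀ v, G.degree v ≤ k)
    {W : Set V} (hfin : W.Finite) (hSW : Disjoint S W) (hW : (G.induce W).Preconnected)
    {b u w : V} (hb : b ∈ W) (hu : u ∈ S) (hw : w ∈ S) (hbu : G.Adj b u) (hbw : G.Adj b w)
    (huw : u ≠ w) (hcuw : c u = c w) : ∃ c' : V → Fin k, IsProperOn G c' (S ∪ W) := by
  classical
  let f : V → ℕ := fun v => if hv : v ∈ W then (G.induce W).dist ⟨v, hv⟩ ⟨b, hb⟩ else 0
  obtain ⟨c₁, hc₁S, hc₁⟩ := hc.exists_union_of_descent hdeg f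
    (hfin.sdiff : (W \ {b}).Finite).toFinset (by
      intro v hv
      obtain ⟨hvW, hvb⟩ : v ∈ W ∧ v ≠ b := by simpa using hv
      obtain ⟨⟨t, htW⟩, hvt, hlt⟩ := exists_adj_dist_lt (hW ⟨v, hvW⟩ ⟨b, hb⟩)
        fun h => hvb (congrArg Subtype.val h)
      exact ⟨hSW.notMem_of_mem_right hvW, t, hvt, hSW.notMem_of_mem_right htW,
        by simpa only [f, hvW, htW, dif_pos] using hlt⟩)
  rw [Set.Finite.coe_toFinset] at hc₁
  obtain ⟨c₂, -, hc₂⟩ := hc₁.exists_insert_of_redundant_neighbor (x := b) (y := u)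
    (by simp [hSW.notMem_of_mem_right hb]) (hdeg b) hbu
    fun _ => ⟨w, huw.symm, hbw, by rw [hc₁S hw, hc₁S hu, hcuw]⟩
  refine ⟨c₂, ?_⟩
  rwa [← Set.union_insert, Set.insert_sdiff_singleton, Set.insert_eq_of_mem hb] at hc₂

lemma colorable_of_degree_lt [Finite V] (hc : IsProperOn G c S) (hdeg : ∀ v ∉ S, G.degree v < k) :
    G.Colorable k := by
  obtain ⟨T, hST, ⟨d, hd⟩, hmax⟩ :=
    Finite.exists_le_maximal (p := fun T : Set V => ∃ c : V → Fin k, IsProperOn G c T) ⟨c, hc⟩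
  have hT : ∀ v, v ∈ T := by
    by_contra! ⟨x, hx⟩
    obtain ⟨d', -, hd'⟩ := hd.exists_insert_of_degree_lt hx (hdeg x fun h => hx (hST h))
    exact hx (hmax ⟨d', hd'⟩ (Set.subset_insert x T) (Set.mem_insert x T))
  exact ⟨Coloring.mk d fun huv => hd (hT _) (hT _) huv⟩

end IsProperOn

theorem colorable_of_ncard_degree_ge_le [Finite V] [G.LocallyFinite] {k : ℕ}
    (h : {v | k ≤ G.degree v}.ncard ≤ k) : G.Colorable k := by
  rcases isEmpty_or_nonempty V with _ | ⟨⟨v⟩⟩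
  · exact .of_isEmpty k
  have hk : NeZero k := ⟨by
    rintro rfl
    exact (Set.ncard_pos (Set.toFinite _)).2 ⟨v, Nat.zero_le _⟩ |>.not_ge h⟩
  obtain ⟨c, -, hc⟩ := (Set.toFinite {v | k ≤ G.degree v}).exists_injOn_of_encard_le
    (t := (Set.univ : Set (Fin k))) (by
      rw [Set.encard_univ, ENat.card_eq_coe_natCard, Nat.card_fin, ← (Set.toFinite _).cast_ncard_eq]
      exact_mod_cast h)
  exact IsProperOn.colorable_of_degree_lt (fun u hu v hv huv => hc.ne hu hv huv.ne)
    fun v hv => not_le.1 hv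

lemma preconnected_induce_path_diff_end {u v : V} {p : G.Walk u v} (hp : p.IsPath) :
    (G.induce ({w | w ∈ p.support} \ {v})).Preconnected := by
  by_cases hnil : p.Nil
  · rw [Walk.nil_iff_support_eq.1 hnil, hnil.eq]
    rintro ⟨w, hw⟩
    simp at hw
  have hnd : (p.dropLast.support ++ [v]).Nodup := by
    rw [Walk.support_dropLast_concat hnil]
    exact hp.support_nodup
  have hset : {w | w ∈ p.support} \ {v} = {w | w ∈ p.dropLast.support} := by
    ext w
    have hv : v ∉ p.dropLast.support := fun h =>
      List.disjoint_of_nodup_append hnd h (List.mem_singleton_self v)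
    rw [← Walk.support_dropLast_concat hnil]
    simp only [Set.mem_sdiff, Set.mem_ofPred_eq, List.mem_append, List.mem_singleton,
      Set.mem_singleton_iff]
    grind
  rw [hset]
  exact p.dropLast.connected_induce_support.preconnected

lemma preconnected_induce_cycle_diff_singleton {v a : V} {c : G.Walk v v}
    (hc : c.IsCycle) (ha : a ∈ c.support) :
    (G.induce ({w | w ∈ c.support} \ {a})).Preconnected := by
  classical
  have hrot : (c.rotate a ha).IsCycle := (Walk.isCycle_rotate ha).2 hc
  have hset : {w | w ∈ c.support} = {w | w ∈ (c.rotate a ha).tail.support} := by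
    ext w
    rw [Set.mem_ofPred_eq, Set.mem_ofPred_eq, ← Walk.mem_support_rotate_iff c a ha,
      Walk.support_tail_of_not_nil _ hrot.not_nil, Walk.mem_support_iff]
    refine or_iff_right_of_imp ?_
    rintro rfl
    exact Walk.end_mem_tail_support hrot.not_nil
  rw [hset]
  exact preconnected_induce_path_diff_end hrot.isPath_tail

lemma exists_isPath_append_neighbors_mem_support [Finite V] {y x : V} (q : G.Walk y x)
    (hq : q.IsPath) :
    ∃ (z : V) (p : G.Walk z y), (p.append q).IsPath ∧
      ∀ u, G.Adj z u → u ∈ (p.append q).support := by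
  have := Fintype.ofFinite V
  induction hm : Fintype.card V - q.length using Nat.strong_induction_on generalizing y with
  | _ m ih =>
    by_cases hmax : ∀ u, G.Adj y u → u ∈ q.support
    · exact ⟨y, Walk.nil, hq, hmax⟩
    · push Not at hmax
      obtain ⟨u, hyu, huq⟩ := hmax
      have hlt := hq.length_lt
      obtain ⟨z, p, hp, hz⟩ := ih _ (by rw [Walk.length_cons]; omega)
        (Walk.cons hyu.symm q) (hq.cons huq) rfl
      rw [← Walk.concat_append] at hp hz
      exact ⟨z, p.concat hyu.symm, hp, hz⟩

lemma isCycle_cons_take_reverse {z x : V} {p : G.Walk z x} (hp : p.IsPath) {m : ℕ} (hm : 2 ≤ m)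
    (hmp : m ≤ p.length) (hzm : G.Adj z (p.getVert m)) :
    (Walk.cons hzm (p.take m).reverse).IsCycle := by
  refine (Walk.cons_isCycle_iff _ _).2 ⟨(hp.take m).reverse, fun hedge => ?_⟩
  rw [Walk.edges_reverse, List.mem_reverse] at hedge
  have hsnd : p.getVert m = p.getVert 1 := by
    have := (hp.take m).eq_snd_of_mem_edges hedge
    rwa [Walk.snd, Walk.take_getVert, min_eq_right (by omega)] at this
  have : m = 1 :=
    hp.getVert_injOn (Set.mem_ofPred.2 hmp) (Set.mem_ofPred.2 (by omega)) hsnd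
  omega

lemma exists_isCycle_of_neighbors_mem_support [G.LocallyFinite] {z x : V} {p : G.Walk z x}
    (hp : p.IsPath) (hz : ∀ u, G.Adj z u → u ∈ p.support) (hdeg : 2 ≤ G.degree z) :
    ∃ c : G.Walk z z, c.IsCycle ∧ c.support ⊆ p.support ∧ ∀ u, G.Adj z u → u ∈ c.support := by
  have exists_index : ∀ u, G.Adj z u → ∃ i ≤ p.length, p.getVert i = u := fun u hu => by
    obtain ⟨i, hi, hile⟩ := Walk.mem_support_iff_exists_getVert.1 (hz u hu)
    exact ⟨i, hile, hi⟩
  let I : Set ℕ := {i | i ≤ p.length ∧ G.Adj z (p.getVert i)}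
  have hI : I.Nonempty := by
    obtain ⟨u, hu⟩ := (G.degree_pos_iff_exists_adj z).1 (by omega)
    obtain ⟨i, hi, rfl⟩ := exists_index u hu
    exact ⟨i, hi, hu⟩
  obtain ⟨m, ⟨hm, hzm⟩, hmax⟩ :=
    Set.exists_max_image I id ((Set.finite_le_nat p.length).subset fun i hi => hi.1) hI
  have exists_index_le : ∀ u, G.Adj z u → ∃ i ≤ m, p.getVert i = u := fun u hu => by
    obtain ⟨i, hi, rfl⟩ := exists_index u hu
    exact ⟨i, hmax i ⟨hi, hu⟩, rfl⟩
  have two_le_m : 2 ≤ m := by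
    by_contra! hm2
    have huniq : ∀ u, G.Adj z u → u = p.getVert 1 := fun u hu => by
      obtain ⟨i, hi, rfl⟩ := exists_index_le u hu
      obtain rfl | rfl : i = 0 ∨ i = 1 := by omega
      · simp at hu
      · rfl
    have : G.degree z ≤ 1 := Finset.card_le_one.2 fun u hu v hv => by
      rw [huniq u (by simpa using hu), huniq v (by simpa using hv)]
    omega
  refine ⟨Walk.cons hzm (p.take m).reverse, isCycle_cons_take_reverse hp two_le_m hm hzm, ?_,
    fun u hu => ?_⟩
  · rw [Walk.support_cons, Walk.support_reverse, Walk.support_take]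
    exact List.cons_subset.2 ⟨p.start_mem_support,
      List.reverse_subset.2 (List.take_subset _ _)⟩
  · obtain ⟨i, hi, rfl⟩ := exists_index_le u hu
    rw [Walk.support_cons, Walk.support_reverse, List.mem_cons, List.mem_reverse]
    refine Or.inr (Walk.mem_support_iff_exists_getVert.2 ⟨i, ?_, ?_⟩)
    · rw [Walk.take_getVert, min_eq_right hi]
    · rw [Walk.take_length]
      exact le_min hi (hi.trans hm)

/-- `S` is a minimal set of vertices on which `G` has no proper colouring with `k` colours: the
vertex set of a minimal counterexample. -/
def IsCritical (G : SimpleGraph V) (k : ℕ) (S : Set V) : Prop :=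
  Minimal (fun T => ¬ ∃ c : V → Fin k, IsProperOn G c T) S

lemma exists_isCritical_of_not_colorable [Finite V] {k : ℕ} (h : ¬ G.Colorable k) :
    ∃ S, IsCritical G k S := by
  refine exists_minimal_of_wellFoundedLT _ ⟨Set.univ, ?_⟩
  rintro ⟨c, hc⟩
  exact h ⟨Coloring.mk c fun huv => hc (Set.mem_univ _) (Set.mem_univ _) huv⟩

namespace IsCritical

variable {k : ℕ} {S : Set V}

lemma exists_isProperOn_of_ssubset (hS : IsCritical G k S) {T : Set V} (hT : T ⊂ S) :
    ∃ c : V → Fin k, IsProperOn G c T := by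
  by_contra h
  exact hT.not_subset (hS.le_of_le h hT.subset)

lemma nonempty (hS : IsCritical G k S) (hk : 0 < k) : S.Nonempty := by
  by_contra! h
  exact hS.prop ⟨fun _ => ⟨0, hk⟩, fun u hu => by simp [h] at hu⟩

lemma exists_adj_sdiff (hS : IsCritical G k S) {T : Set V} (hT : T ⊂ S) (hne : T.Nonempty) :
    ∃ u ∈ T, ∃ v ∈ S \ T, G.Adj u v := by
  obtain ⟨c, hc⟩ := hS.exists_isProperOn_of_ssubset hT
  obtain ⟨d, hd⟩ := hS.exists_isProperOn_of_ssubset (hT.subset.sdiff_ssubset_of_nonempty hne)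
  by_contra! h
  refine hS.prop ?_
  simpa only [Set.union_sdiff_cancel hT.subset] using hc.union hd h

variable [G.LocallyFinite]

lemma le_degree (hS : IsCritical G k S) {v : V} (hv : v ∈ S) : k ≤ G.degree v := by
  by_contra! hlt
  obtain ⟨c, hc⟩ := hS.exists_isProperOn_of_ssubset (Set.sdiff_singleton_ssubset.2 hv)
  obtain ⟨c', -, hc'⟩ := hc.exists_insert_of_degree_lt (by simp) hlt
  rw [Set.insert_sdiff_singleton, Set.insert_eq_of_mem hv] at hc'
  exact hS.prop ⟨c', hc'⟩

lemma mem_of_adj (hS : IsCritical G k S) {u v : V} (hv : v ∈ S) (hdeg : G.degree v ≤ k)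
    (hvu : G.Adj v u) : u ∈ S := by
  by_contra hu
  obtain ⟨c, hc⟩ := hS.exists_isProperOn_of_ssubset (Set.sdiff_singleton_ssubset.2 hv)
  obtain ⟨c', -, hc'⟩ := hc.exists_insert_of_redundant_neighbor (by simp) hdeg hvu
    fun h => absurd h.1 hu
  rw [Set.insert_sdiff_singleton, Set.insert_eq_of_mem hv] at hc'
  exact hS.prop ⟨c', hc'⟩

lemma mem_of_mem_support (hS : IsCritical G k S) (hdeg : ∀ v, G.degree v ≤ k) {u v : V}
    (p : G.Walk u v) (hu : u ∈ S) : ∀ w ∈ p.support, w ∈ S := by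
  induction p with
  | nil => simpa using hu
  | cons huw p ih =>
    rw [Walk.support_cons]
    exact List.forall_mem_cons.2 ⟨hu, ih (hS.mem_of_adj hu (hdeg _) huw)⟩

lemma not_preconnected_sdiff_pair (hS : IsCritical G k S) (hfin : S.Finite)
    (hdeg : ∀ v, G.degree v ≤ k) {v x y : V} (hv : v ∈ S) (hvx : G.Adj v x) (hvy : G.Adj v y)
    (hne : x ≠ y) (hxy : ¬ G.Adj x y) : ¬ (G.induce (S \ {x, y})).Preconnected := by
  intro hconn
  have hsub : {x, y} ⊆ S :=
    Set.pair_subset (hS.mem_of_adj hv (hdeg v) hvx) (hS.mem_of_adj hv (hdeg v) hvy)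
  obtain ⟨c, -⟩ := hS.exists_isProperOn_of_ssubset (Set.sdiff_singleton_ssubset.2 hv)
  have hpair : IsProperOn G (fun _ => c v) {x, y} := by
    rintro u (rfl | rfl) w (rfl | rfl) huw
    exacts [absurd rfl huw.ne, absurd huw hxy, absurd huw.symm hxy, absurd rfl huw.ne]
  obtain ⟨d, hd⟩ := hpair.exists_union_of_preconnected hdeg hfin.sdiff
    Set.disjoint_sdiff_right hconn (b := v) ⟨hv, by simp [hvx.ne, hvy.ne]⟩ (Set.mem_insert x _)
    (Set.mem_insert_of_mem x rfl) hvx hvy hne rfl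
  rw [Set.union_sdiff_cancel hsub] at hd
  exact hS.prop ⟨d, hd⟩

lemma eq_of_no_cut_vertex (hS : IsCritical G k S) (hfin : S.Finite) (hdeg : ∀ v, G.degree v ≤ k)
    {C : Set V} (hCS : C ⊆ S) (hC : (G.induce C).Preconnected)
    (hcut : ∀ a ∈ C, (G.induce (C \ {a})).Preconnected) {z : V} (hz : z ∈ C)
    (hzC : ∀ u, G.Adj z u → u ∈ C) : C = S := by
  classical
  by_contra hne
  have hss : C ⊂ S := hCS.ssubset_of_ne hne
  obtain ⟨w, hw, u', hu', hwu'⟩ := hS.exists_adj_sdiff hss ⟨z, hz⟩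
  obtain ⟨walk⟩ := hC ⟨z, hz⟩ ⟨w, hw⟩
  obtain ⟨⟨⟨⟨a, ha⟩, ⟨b, hb⟩⟩, hab⟩, -, ha', hb'⟩ := walk.exists_boundary_dart
    {t | ∀ u ∈ S \ C, ¬ G.Adj t u} (fun u hu hzu => hu.2 (hzC u hzu))
    fun h => h u' hu' hwu'
  obtain ⟨u, hu, hbu⟩ : ∃ u ∈ S \ C, G.Adj b u := by simpa [and_assoc] using hb'
  have hab : G.Adj a b := hab
  obtain ⟨c, hc⟩ := hS.exists_isProperOn_of_ssubset (hCS.sdiff_ssubset_of_nonempty ⟨z, hz⟩)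
  have hau : u ≠ a := fun h => hu.2 (h ▸ ha)
  have hca := hc.insert_update (x := a) (a := c u) (fun h => h.2 ha)
    fun w hw haw => absurd haw (ha' w hw)
  obtain ⟨d, hd⟩ := hca.exists_union_of_preconnected hdeg (hfin.subset hCS).sdiff
    (W := C \ {a}) (by
      rw [Set.disjoint_insert_left]
      exact ⟨by simp, Set.disjoint_sdiff_left.mono_right Set.sdiff_subset⟩)
    (hcut a ha) (b := b) ⟨hb, hab.ne'⟩ (Set.mem_insert_of_mem a hu) (Set.mem_insert a _)
    hbu hab.symm hau (by simp [hau])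
  have hcover : insert a (S \ C) ∪ C \ {a} = S := by
    rw [Set.insert_union, ← Set.union_insert, Set.insert_sdiff_singleton, Set.insert_eq_of_mem ha,
      Set.sdiff_union_of_subset hCS]
  exact hS.prop ⟨d, hcover ▸ hd⟩

lemma exists_isPath_append_spanning [Finite V] (hS : IsCritical G k S) (hk : 2 ≤ k)
    (hdeg : ∀ v, G.degree v ≤ k) {y x : V} (q : G.Walk y x) (hq : q.IsPath) (hy : y ∈ S) :
    ∃ (z : V) (p : G.Walk z y),
      (p.append q).IsPath ∧ {w | w ∈ (p.append q).support} = S := by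
  obtain ⟨z, p, hp, hz⟩ := exists_isPath_append_neighbors_mem_support q hq
  have hzS : z ∈ S := hS.mem_of_mem_support hdeg p.reverse hy z (by simp)
  obtain ⟨c, hc, hcp, hzc⟩ :=
    exists_isCycle_of_neighbors_mem_support hp hz (hk.trans (hS.le_degree hzS))
  have hcS : {w | w ∈ c.support} = S := hS.eq_of_no_cut_vertex (Set.toFinite S) hdeg
    (hS.mem_of_mem_support hdeg c hzS) c.connected_induce_support.preconnected
    (fun a ha => preconnected_induce_cycle_diff_singleton hc ha) c.start_mem_support hzc
  exact ⟨z, p, hp, Set.Subset.antisymm (hS.mem_of_mem_support hdeg _ hzS)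
    fun w hw => hcp (hcS.ge hw)⟩

end IsCritical

lemma exists_not_adj_neighbors [G.LocallyFinite] {k : ℕ} (hcl : G.CliqueFree (k + 1)) {v : V}
    (hv : k ≤ G.degree v) : ∃ x y, G.Adj v x ∧ G.Adj v y ∧ x ≠ y ∧ ¬ G.Adj x y := by
  classical
  by_contra! h
  obtain ⟨N, hN, hcard⟩ := Finset.exists_subset_card_eq (hv : k ≤ (G.neighborFinset v).card)
  have adj_of_mem : ∀ u ∈ N, G.Adj v u := fun u hu => (G.mem_neighborFinset v u).1 (hN hu)
  have hclique : G.IsNClique k N :=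
    ⟨fun x hx y hy hxy => h x y (adj_of_mem x hx) (adj_of_mem y hy) hxy, hcard⟩
  exact hcl _ (hclique.insert adj_of_mem)

lemma exists_adj_ne_ne [G.LocallyFinite] {v : V} (hv : 3 ≤ G.degree v) (x y : V) :
    ∃ u, G.Adj v u ∧ u ≠ x ∧ u ≠ y := by
  classical
  obtain ⟨u, hu, hxy⟩ :=
    Finset.exists_mem_notMem_of_card_lt_card (Finset.card_le_two (a := x) (b := y) |>.trans_lt hv)
  exact ⟨u, by simpa using hu, by simpa using hxy⟩

lemma colorable_of_degree_le_of_cliqueFree_of_three_le [Finite V] [G.LocallyFinite] {k : ℕ}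
    (hk : 3 ≤ k) (hdeg : ∀ v, G.degree v ≤ k) (hcl : G.CliqueFree (k + 1)) : G.Colorable k := by
  by_contra hG
  obtain ⟨S, hS⟩ := exists_isCritical_of_not_colorable hG
  obtain ⟨v, hv⟩ := hS.nonempty (by omega)
  obtain ⟨x, y, hvx, hvy, hxy, hnadj⟩ := exists_not_adj_neighbors hcl (hS.le_degree hv)
  obtain ⟨z, p, hpath, hspan⟩ := hS.exists_isPath_append_spanning (by omega) hdeg
    (Walk.cons hvy.symm (Walk.cons hvx Walk.nil)) (by simp [hvy.ne', hvx.ne, hxy.symm])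
    (hS.mem_of_adj hv (hdeg v) hvy)
  have hsupp : (p.append (Walk.cons hvy.symm (Walk.cons hvx Walk.nil))).support =
      p.support ++ [v, x] := by simp [Walk.support_append]
  have hnodup : (p.support ++ [v, x]).Nodup := hsupp ▸ hpath.support_nodup
  have mem_iff : ∀ w, w ∈ S ↔ w ∈ p.support ∨ w = v ∨ w = x := fun w => by
    rw [← hspan, Set.mem_ofPred_eq, hsupp]
    simp
  have hsdiff : S \ {x, y} = ({w | w ∈ p.support} \ {y}) ∪ {v} := by
    ext w
    simp only [Set.mem_sdiff, Set.mem_union, Set.mem_insert_iff, Set.mem_singleton_iff,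
      Set.mem_ofPred_eq, mem_iff]
    grind [hvx.ne, hvy.ne]
  obtain ⟨u, hvu, hux, huy⟩ := exists_adj_ne_ne (hk.trans (hS.le_degree hv)) x y
  have hup : u ∈ p.support :=
    ((mem_iff u).1 (hS.mem_of_adj hv (hdeg v) hvu)).resolve_right (by simp [hvu.ne', hux])
  refine hS.not_preconnected_sdiff_pair (Set.toFinite S) hdeg hv hvx hvy hxy hnadj ?_
  rw [hsdiff]
  exact (connected_induce_union (preconnected_induce_path_diff_end hpath.of_append_left)
    .of_subsingleton ⟨hup, huy⟩ (Set.mem_singleton v) hvu.symm).preconnected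

theorem colorable_of_degree_le_of_cliqueFree [Finite V] [G.LocallyFinite] {k : ℕ} (hk : k ≠ 2)
    (hdeg : ∀ v, G.degree v ≤ k) (hcl : G.CliqueFree (k + 1)) : G.Colorable k := by
  obtain rfl | rfl | hk : k = 0 ∨ k = 1 ∨ 3 ≤ k := by omega
  · exact G.colorable_zero_iff.2 (cliqueFree_one.1 hcl)
  · exact colorable_one_iff.2 (cliqueFree_two.1 hcl)
  · exact colorable_of_degree_le_of_cliqueFree_of_three_le hk hdeg hcl

end Coloring

section Span

open Submodule

variable {K E ι : Type*} [DivisionRing K] [AddCommGroup E] [Module K E] [Module.Finite K E]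
  [Fintype ι]

lemma exists_span_lt_span_update [DecidableEq ι] (hι : Module.finrank K E ≤ Fintype.card ι)
    {x : ι → E} (hx : span K (Set.range x) ≠ ⊤) :
    ∃ j v, v ∉ span K (Set.range x) ∧
      span K (Set.range x) < span K (Set.range (Function.update x j v)) := by
  obtain ⟨v, hv⟩ := SetLike.exists_not_mem_of_ne_top _ hx
  have hdep : ¬ LinearIndependent K x := fun hli => hx <| eq_top_of_finrank_eq <|
    le_antisymm (finrank_le _) (hι.trans_eq (finrank_span_eq_card hli).symm)
  obtain ⟨j, hj⟩ : ∃ j, x j ∈ span K (x '' (Set.univ \ {j})) := by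
    simpa [linearIndependent_iff_notMem_span] using hdep
  refine ⟨j, v, hv, lt_of_le_of_ne (span_le.2 ?_) fun h => hv ?_⟩
  · have others_mem : ∀ i ≠ j, x i ∈ span K (Set.range (Function.update x j v)) := fun i hi =>
      subset_span ⟨i, Function.update_of_ne hi v x⟩
    rintro _ ⟨i, rfl⟩
    obtain rfl | hi := eq_or_ne i j
    · exact span_le.2 (by rintro _ ⟨l, hl, rfl⟩; exact others_mem l hl.2) hj
    · exact others_mem i hi
  · rw [h]
    exact subset_span ⟨j, Function.update_self j v x⟩

lemma exists_span_eq_top (hι : Module.finrank K E ≤ Fintype.card ι) (x : ι → E) :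
    ∃ y : ι → E, span K (Set.range y) = ⊤ ∧ (∀ i, x i ≠ 0 → y i ≠ 0) ∧
      ∀ i j, x i ≠ x j → y i ≠ y j := by
  classical
  induction hW : span K (Set.range x) using WellFoundedGT.induction generalizing x with
  | ind W ih =>
    subst hW
    by_cases hx : span K (Set.range x) = ⊤
    · exact ⟨x, hx, fun _ => id, fun _ _ => id⟩
    obtain ⟨j, v, hv, hlt⟩ := exists_span_lt_span_update hι hx
    obtain ⟨y, hy, hne, hinj⟩ := ih _ hlt _ rfl
    have hvx : ∀ i, x i ≠ v := fun i hi => hv (hi ▸ subset_span (Set.mem_range_self i))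
    refine ⟨y, hy, fun i hi => hne i ?_, fun i l hil => hinj i l ?_⟩
    · by_cases hij : i = j
      · subst hij
        rw [Function.update_self]
        exact ne_of_mem_of_not_mem (zero_mem _) hv |>.symm
      · rwa [Function.update_of_ne hij]
    · simp only [Function.update_apply]
      split_ifs with h₁ h₂ h₂
      · exact absurd (by rw [h₁, h₂]) hil
      · exact (hvx l).symm
      · exact hvx i
      · exact hil

end Span

lemma exists_rank_eq_of_colorable {K ι V : Type*} [Field K] [Fintype K] [Fintype ι] [Fintype V]
    {G : SimpleGraph V} (hιV : Fintype.card ι ≤ Fintype.card V)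
    (hG : G.Colorable (Fintype.card K ^ Fintype.card ι - 1)) :
    ∃ X : Matrix ι V K, X.rank = Fintype.card ι ∧ (∀ j, X.col j ≠ 0) ∧
      ∀ j k, G.Adj j k → X.col j ≠ X.col k := by
  classical
  have hcard : Fintype.card {v : ι → K // v ≠ 0} = Fintype.card K ^ Fintype.card ι - 1 := by
    rw [Fintype.card_subtype_compl, Fintype.card_subtype_eq, Fintype.card_fun]
  let c : G.Coloring {v : ι → K // v ≠ 0} := hG.toColoring hcard.ge
  obtain ⟨y, hy, hne, hinj⟩ := exists_span_eq_top (K := K)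
    (by rwa [Module.finrank_fintype_fun_eq_card]) fun j => (c j : ι → K)
  refine ⟨Matrix.of fun i j => y j i, ?_, fun j => hne j (c j).2,
    fun j k hjk => hinj j k fun h => c.valid hjk (Subtype.ext h)⟩
  rw [Matrix.rank_eq_finrank_span_cols]
  have hcols : Set.range (Matrix.of fun i j => y j i).col = Set.range y := rfl
  rw [hcols, hy, finrank_top, Module.finrank_fintype_fun_eq_card]

theorem stmt8_general {K ι V : Type*} [Field K] [Fintype K] [Fintype ι] [Fintype V]
    (hιV : Fintype.card ι ≤ Fintype.card V) (G : SimpleGraph V) [DecidableRel G.Adj]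
    (h : (Fintype.card K ^ Fintype.card ι ≠ 3 ∧
        (∀ v, G.degree v ≤ Fintype.card K ^ Fintype.card ι - 1) ∧
        G.CliqueFree (Fintype.card K ^ Fintype.card ι)) ∨
      (Finset.univ.filter fun v => Fintype.card K ^ Fintype.card ι - 1 ≤ G.degree v).card ≤
        Fintype.card K ^ Fintype.card ι - 1) :
    ∃ X : Matrix ι V K, X.rank = Fintype.card ι ∧ (∀ j, (fun i => X i j) ≠ 0) ∧
      ∀ j k, G.Adj j k → (fun i => X i j) ≠ (fun i => X i k) := by
  have hpos : 0 < Fintype.card K ^ Fintype.card ι := Nat.pow_pos Fintype.card_pos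
  refine exists_rank_eq_of_colorable hιV ?_
  rcases h with ⟨hne, hdeg, hcl⟩ | hcard
  · exact colorable_of_degree_le_of_cliqueFree (by omega) hdeg (by rwa [Nat.sub_add_cancel hpos])
  · refine colorable_of_ncard_degree_ge_le ?_
    rwa [Set.ncard_eq_toFinset_card', Set.toFinset_ofPred]

/-- Theorem 3: if the requirements graph `G` either (i) has maximum degree at most
`2^q - 1` and no clique on `2^q` vertices, or (ii) has at most `2^q - 1` vertices of
degree at least `2^q - 1`, then a `2^n` factorial in blocks of size `2^q` exists from
which all main effects and all interactions of `G` are estimable. -/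
theorem stmt8 (q n : ℕ) (hq : 1 ≤ q) (hqn : q ≤ n)
    (G : SimpleGraph (Fin n)) [DecidableRel G.Adj]
    (h : ((∀ v : Fin n, G.degree v ≤ 2 ^ q - 1) ∧ G.CliqueFree (2 ^ q)) ∨
      (Finset.univ.filter (fun v : Fin n => 2 ^ q - 1 ≤ G.degree v)).card ≤ 2 ^ q - 1) :
    ∃ X : Matrix (Fin q) (Fin n) (ZMod 2),
      X.rank = q ∧
      (∀ j : Fin n, (fun i => X i j) ≠ 0) ∧
      (∀ j k : Fin n, G.Adj j k → (fun i => X i j) ≠ (fun i => X i k)) := by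
  have hne : 2 ^ q ≠ 3 := by
    rw [← Nat.succ_pred_eq_of_pos hq, pow_succ]
    omega
  simpa only [Fintype.card_fin] using stmt8_general (K := ZMod 2) (ι := Fin q)
    (by simpa using hqn) G (by simpa [hne] using h)
end

section
/- (Bollobás–Guy) Let n ≥ 2 and let G be an acyclic simple graph on Fin n whose maximum vertex degree d satisfies 3·d ≤ n + 8 or 3·d = n + 10. Then there exists a matrix X : Matrix (Fin 2) (Fin n) (ZMod 2) of rank 2 such that every column of X is nonzero, for all j, k with G.Adj j k the j-th and k-th columns of X differ, and the number of unordered pairs {j, k} of distinct indices with differing columns equals φ_max = C(n, 2) − v·w − 3·C(v, 2) where v = n / 3 (integer division), w = n % 3 and C(a, 2) = a(a−1)/2. (Equivalently, G admits an equitable proper 3-coloring, i.e., a proper 3-coloring whose color class sizes pairwise differ by at most one, yielding a 2^n factorial in blocks of size four that provides all required estimates and achieves the bound φ_max.) -/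
/-!
Coloring the columns with the three nonzero vectors of `GF(2)²` turns the matrix into an equitable
proper `3`-coloring of `G`: the pairs of equal columns are the monochromatic pairs, and their number
depends only on the class sizes.

Let `k = n / 3` and `r = n % 3`; the degree hypothesis says that all degrees are at most
`k + r + 2`. More generally than a forest, let `G` be bipartite with fewer than `n` edges. Among the
bipartitions `(A, B)` with `|B| ≤ |A|` choose one with `|B|` maximal. For `S ⊆ B` let `E(S)` consist
of `S` and the vertices of `A` with no neighbor in `S`; it is independent. It suffices to cover `B`
by two disjoint large independent sets: they can be trimmed inside `A` to the sizes of two classes,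
and what is left over lies in `A`.

* If `|B| ≥ k`, let `S` consist of the `|B| - k` vertices of `B` of smallest degree. By averaging,
  their degrees add up to less than `k + r`, so `E(S)` is large enough to be paired with `B \ S`.
* If `|B| < k`, maximality of `|B|` excludes isolated vertices in `A`, so `E(S)` and `E(B \ S)` are
  disjoint for every `S ⊆ B`. Let `ℓ(b)` be the number of leaves at `b`. Counting edges, `A` has
  more than `|A| - |B|` leaves. If some `ℓ(b)` exceeds `(n + 1) / 3 - |B|`, take `S = {b}`: the
  bound on the degree of `b` makes `E(S)` large, and its leaves make `E(B \ S)` large. Otherwise all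
  weights `ℓ(b) - 1` are at most `k - |B|`; adding them one at a time, one reaches an `S` of total
  weight between `k - |B|` and `2 (k - |B|)`, for which both `S` and `B \ S` have enough leaves.
-/

open Finset
open scoped Matrix

/-! ### Equitable maps -/

lemma card_filter_lt_ne_add_sum_choose_two {V ι : Type*} [Fintype V] [LinearOrder V] [Fintype ι]
    [DecidableEq ι] (c : V → ι) :
    #{p : V × V | p.1 < p.2 ∧ c p.1 ≠ c p.2} + ∑ i, (#{v | c v = i}).choose 2 =
      (Fintype.card V).choose 2 := by
  have hmono : #{p : V × V | p.1 < p.2 ∧ c p.1 = c p.2} = ∑ i, (#{v | c v = i}).choose 2 := by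
    rw [card_eq_sum_card_fiberwise (f := fun p ↦ c p.1) (t := univ) (by simp)]
    refine sum_congr rfl fun i _ ↦ ?_
    rw [← card_product_filter_lt]
    congr 1
    grind
  rw [← hmono, ← Fintype.card_product_filter_lt, add_comm]
  simpa only [filter_filter] using
    card_filter_add_card_filter_not (s := {p : V × V | p.1 < p.2}) fun p ↦ c p.1 = c p.2

lemma sum_choose_two_of_equitableOn {ι : Type*} {s : Finset ι} {f : ι → ℕ}
    (hf : (s : Set ι).EquitableOn f) :
    ∑ i ∈ s, (f i).choose 2 = (∑ i ∈ s, f i) / #s * ((∑ i ∈ s, f i) % #s) +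
      #s * ((∑ i ∈ s, f i) / #s).choose 2 := by
  have hdiv := Nat.div_add_mod (∑ i ∈ s, f i) #s
  set v := (∑ i ∈ s, f i) / #s
  have hchoose : ∀ i ∈ s, (f i).choose 2 + v * v = v.choose 2 + v * f i := by
    intro i hi
    obtain h | h := equitableOn_iff.1 hf i hi
    · rw [h]
    · rw [h, Nat.choose_succ_succ' v 1, Nat.choose_one_right]
      ring
  have hsum := sum_congr rfl hchoose
  simp only [sum_add_distrib, sum_const, smul_eq_mul, ← mul_sum] at hsum
  nlinarith

lemma card_filter_lt_ne_of_equitableOn {V ι : Type*} [Fintype V] [LinearOrder V] [Fintype ι]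
    [DecidableEq ι] {c : V → ι} (hc : Set.univ.EquitableOn fun i ↦ #{v | c v = i}) :
    #{p : V × V | p.1 < p.2 ∧ c p.1 ≠ c p.2} = (Fintype.card V).choose 2 -
      Fintype.card V / Fintype.card ι * (Fintype.card V % Fintype.card ι) -
      Fintype.card ι * (Fintype.card V / Fintype.card ι).choose 2 := by
  have hclasses : ∑ i, #{v | c v = i} = Fintype.card V :=
    (card_eq_sum_card_fiberwise fun _ _ ↦ mem_univ _).symm
  have hsum := sum_choose_two_of_equitableOn (s := univ) (by simpa only [coe_univ] using hc)
  have hpairs := card_filter_lt_ne_add_sum_choose_two c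
  rw [hclasses, card_univ] at hsum
  omega

lemma exists_apply_ne_of_equitableOn {V ι : Type*} [Fintype V] [DecidableEq ι] [Nontrivial ι]
    {c : V → ι} (hV : 2 ≤ Fintype.card V) (hc : Set.univ.EquitableOn fun i ↦ #{v | c v = i}) :
    ∃ u v, c u ≠ c v := by
  by_contra! hconst
  obtain ⟨x⟩ : Nonempty V := Fintype.card_pos_iff.1 (by omega)
  obtain ⟨i, hi⟩ := exists_ne (c x)
  have hfull : #{v | c v = c x} = Fintype.card V := by
    rw [filter_true_of_mem fun v _ ↦ hconst v x, card_univ]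
  have hempty : #{v | c v = i} = 0 :=
    card_filter_eq_zero_iff.2 fun v _ hv ↦ hi (hv.symm.trans (hconst v x))
  have hdiff := hc (Set.mem_univ (c x)) (Set.mem_univ i)
  simp only [hfull, hempty] at hdiff
  omega

/-! ### Matrices over `GF(2)` with prescribed columns -/

/-- The three nonzero vectors of `GF(2)²`, the possible columns of a generator matrix; they serve
as the colors. -/
def nonzeroVec : Fin 3 → Fin 2 → ZMod 2 :=
  ![![1, 0], ![0, 1], ![1, 1]]

lemma nonzeroVec_ne_zero (i : Fin 3) : nonzeroVec i ≠ 0 := by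
  revert i
  decide

lemma nonzeroVec_injective : Function.Injective nonzeroVec := by
  intro i j
  revert i j
  decide

lemma det_nonzeroVec_ne_zero {i j : Fin 3} (h : i ≠ j) :
    (Matrix.of ![nonzeroVec i, nonzeroVec j])ᵀ.det ≠ 0 := by
  rw [Matrix.det_fin_two]
  revert i j
  decide

lemma rank_nonzeroVec_eq_two {V : Type*} [Fintype V] {c : V → Fin 3} {u v : V} (h : c u ≠ c v) :
    (Matrix.of fun i j ↦ nonzeroVec (c j) i).rank = 2 := by
  refine le_antisymm (Matrix.rank_le_card_height _) ?_
  calc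
    2 = (Matrix.of ![nonzeroVec (c u), nonzeroVec (c v)])ᵀ.rank := by
      rw [Matrix.rank_of_det_ne_zero (det_nonzeroVec_ne_zero h), Fintype.card_fin]
    _ = ((Matrix.of fun i j ↦ nonzeroVec (c j) i).submatrix id ![u, v]).rank := by
      congr 1
      ext i j
      fin_cases j <;> rfl
    _ ≤ _ := Matrix.rank_submatrix_le _ _ _

/-! ### Averaging and subset sums -/

lemma exists_subset_card_eq_card_nsmul_sum_le {ι M : Type*} [AddCommMonoid M] [LinearOrder M]
    [IsOrderedAddMonoid M] (s : Finset ι) (f : ι → M) {t : ℕ} (ht : t ≤ #s) :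
    ∃ u ⊆ s, #u = t ∧ #s • ∑ i ∈ u, f i ≤ t • ∑ i ∈ s, f i := by
  classical
  induction s using Finset.strongInduction with
  | H s ih =>
    obtain rfl | hlt := ht.eq_or_lt
    · exact ⟨s, Subset.rfl, rfl, le_rfl⟩
    obtain ⟨m, hm, hmax⟩ := exists_max_image s f (card_pos.1 (by omega))
    have hcard := card_erase_add_one hm
    obtain ⟨u, hus, rfl, hle⟩ := ih (s.erase m) (erase_ssubset hm) (by omega)
    refine ⟨u, hus.trans (erase_subset _ _), rfl, ?_⟩
    calc
      #s • ∑ i ∈ u, f i = #(s.erase m) • ∑ i ∈ u, f i + ∑ i ∈ u, f i := by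
        rw [← hcard, succ_nsmul]
      _ ≤ #u • ∑ i ∈ s.erase m, f i + #u • f m :=
        add_le_add hle (sum_le_card_nsmul _ _ _ fun i hi ↦ hmax i (mem_of_mem_erase (hus hi)))
      _ = #u • ∑ i ∈ s, f i := by
        rw [← nsmul_add, sum_erase_add _ _ hm]

lemma exists_subset_sum_mem_Ico {ι M : Type*} [AddCommMonoid M] [LinearOrder M]
    [IsOrderedCancelAddMonoid M] {s : Finset ι} {f : ι → M} {p d : M} (hf : ∀ i ∈ s, f i ≤ d)
    (hp : 0 < p) (hsum : p ≤ ∑ i ∈ s, f i) :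
    ∃ u ⊆ s, ∑ i ∈ u, f i ∈ Set.Ico p (d + p) := by
  classical
  induction s using Finset.induction_on with
  | empty => exact absurd hsum (by simpa using hp)
  | insert a s ha ih =>
    obtain hs | hs := le_or_gt p (∑ i ∈ s, f i)
    · obtain ⟨u, hu, h⟩ := ih (fun i hi ↦ hf i (mem_insert_of_mem hi)) hs
      exact ⟨u, hu.trans (subset_insert _ _), h⟩
    · refine ⟨insert a s, Subset.rfl, hsum, ?_⟩
      rw [sum_insert ha]
      exact add_lt_add_of_le_of_lt (hf a (mem_insert_self _ _)) hs

/-! ### Equitable colorings of bipartite graphs -/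

section Graph

variable {V : Type*} {G : SimpleGraph V}

lemma isIndepSet_of_isBipartiteWith {s t : Set V} (h : G.IsBipartiteWith s t) : G.IsIndepSet s :=
  fun _ hu _ hv _ huv ↦ Set.disjoint_left.1 h.disjoint hv (h.mem_of_mem_adj hu huv)

variable [Fintype V]

lemma exists_isBipartiteWith_compl [DecidableEq V] (hG : G.IsBipartite) :
    ∃ B : Finset V, G.IsBipartiteWith B Bᶜ ∧ #B ≤ #Bᶜ := by
  obtain ⟨c⟩ := hG
  let B : Finset V := {v | c v = 0}
  have hB : G.IsBipartiteWith B Bᶜ := by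
    refine ⟨disjoint_compl_right, fun u v huv ↦ ?_⟩
    have := c.valid huv
    simp only [B, coe_filter, mem_univ, true_and, Set.mem_ofPred_eq, Set.mem_compl_iff]
    omega
  obtain h | h := le_total #B #Bᶜ
  · exact ⟨B, hB, h⟩
  · refine ⟨Bᶜ, ?_, by rwa [compl_compl]⟩
    simpa using hB.symm

/-- `G` is equitably `q`-colorable: it has a proper coloring with `q` colors whose class sizes,
empty classes included, pairwise differ by at most one. -/
def EquitablyColorable (G : SimpleGraph V) (q : ℕ) : Prop :=
  ∃ c : G.Coloring (Fin q), Set.univ.EquitableOn fun i ↦ #{v | c v = i}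

-- The class sizes of an equitable 3-coloring are `n / 3`, `(n + 1) / 3` and `(n + 2) / 3`.
lemma equitablyColorable_three_of_card_eq {S T : Finset V} (hST : Disjoint S T)
    (hS : G.IsIndepSet S) (hT : G.IsIndepSet T) (hR : G.IsIndepSet (S ∪ T)ᶜ)
    (hScard : #S = Fintype.card V / 3) (hTcard : #T = (Fintype.card V + 1) / 3) :
    EquitablyColorable G 3 := by
  classical
  let c (v : V) : Fin 3 := if v ∈ S then 0 else if v ∈ T then 1 else 2
  have hc : ∀ {u v}, G.Adj u v → c u ≠ c v := by
    intro u v huv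
    have := huv.ne
    have := @hS u
    have := @hT u
    have := @hR u
    grind
  have h₀ : ({v | c v = 0} : Finset V) = S := by grind
  have h₁ : ({v | c v = 1} : Finset V) = T := by grind [disjoint_left]
  have h₂ : ({v | c v = 2} : Finset V) = (S ∪ T)ᶜ := by
    ext v
    by_cases v ∈ S <;> by_cases v ∈ T <;> simp [c, *]
  have hcompl := card_compl_add_card (S ∪ T)
  rw [card_union_of_disjoint hST] at hcompl
  refine ⟨.mk c hc, Set.equitableOn_iff_exists_le_le_add_one.2 ⟨Fintype.card V / 3, ?_⟩⟩
  have hsizes : ∀ i : Fin 3, Fintype.card V / 3 ≤ #{v | c v = i} ∧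
      #{v | c v = i} ≤ Fintype.card V / 3 + 1 := by
    intro i
    fin_cases i
    all_goals simp only [Fin.zero_eta, Fin.mk_one, Fin.reduceFinMk, h₀, h₁, h₂]; omega
  exact fun i _ ↦ hsizes i

lemma equitablyColorable_three_of_cover [DecidableEq V] {B P Q : Finset V} (hP : G.IsIndepSet P)
    (hQ : G.IsIndepSet Q) (hPQ : Disjoint P Q) (hB : B ⊆ P ∪ Q) (hBc : G.IsIndepSet (B : Set V)ᶜ)
    (hPB : #(P ∩ B) ≤ Fintype.card V / 3) (hPcard : Fintype.card V / 3 ≤ #P)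
    (hQB : #(Q ∩ B) ≤ (Fintype.card V + 1) / 3) (hQcard : (Fintype.card V + 1) / 3 ≤ #Q) :
    EquitablyColorable G 3 := by
  obtain ⟨S, hPS, hSP, hS⟩ := exists_subsuperset_card_eq inter_subset_left hPB hPcard
  obtain ⟨T, hQT, hTQ, hT⟩ := exists_subsuperset_card_eq inter_subset_left hQB hQcard
  refine equitablyColorable_three_of_card_eq (hPQ.mono hSP hTQ) (hP.mono hSP) (hQ.mono hTQ)
    (hBc.mono ?_) hS hT
  intro v
  grind

variable [DecidableRel G.Adj] {B S : Finset V}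

lemma sum_degree_lt_card_of_isBipartiteWith {s t : Finset V} (hE : #G.edgeFinset < Fintype.card V)
    (h : G.IsBipartiteWith s t) : ∑ v ∈ s, G.degree v < Fintype.card V := by
  rwa [SimpleGraph.isBipartiteWith_sum_degrees_eq_card_edges h]

lemma card_edgeFinset_lt_of_isAcyclic [Nonempty V] (hG : G.IsAcyclic) :
    #G.edgeFinset < Fintype.card V := by
  classical
  obtain ⟨T, hGT, -, hT⟩ :=
    SimpleGraph.connected_top.exists_isTree_le_of_le_of_isAcyclic (le_top : G ≤ ⊤) hG
  rw [← hT.card_edgeFinset, Nat.lt_succ_iff]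
  exact card_le_card (SimpleGraph.edgeFinset_mono hGT)

/-- The leaves of `G` attached to `v`: its neighbors of degree one. If `B` is a side of a
bipartition and `v ∈ B \ S`, they all belong to the independent set `indepExtension G B S`. -/
def leafNeighborFinset (G : SimpleGraph V) [DecidableRel G.Adj] (v : V) : Finset V :=
  {a ∈ G.neighborFinset v | G.degree a = 1}

lemma mem_leafNeighborFinset {v a : V} :
    a ∈ leafNeighborFinset G v ↔ G.Adj v a ∧ G.degree a = 1 := by
  simp [leafNeighborFinset]

lemma eq_of_mem_leafNeighborFinset {v w a : V} (ha : a ∈ leafNeighborFinset G v)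
    (hw : G.Adj w a) : w = v := by
  rw [mem_leafNeighborFinset] at ha
  exact (SimpleGraph.degree_eq_one_iff_existsUnique_adj.1 ha.2).unique hw.symm ha.1.symm

lemma notMem_of_mem_leafNeighborFinset (hB : G.IsBipartiteWith B Bᶜ) {a b : V} (hb : b ∈ B)
    (ha : a ∈ leafNeighborFinset G b) : a ∉ B :=
  hB.mem_of_mem_adj hb (mem_leafNeighborFinset.1 ha).1

section DecidableEq

variable [DecidableEq V]

lemma isBipartiteWith_insert_of_degree_eq_zero (hB : G.IsBipartiteWith B Bᶜ) {a : V}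
    (ha : G.degree a = 0) :
    G.IsBipartiteWith (insert a B : Finset V) (insert a B : Finset V)ᶜ := by
  refine ⟨disjoint_compl_right, fun u v huv ↦ ?_⟩
  have hu : u ≠ a := by rintro rfl; exact huv.degree_pos_left.ne' ha
  have hv : v ≠ a := by rintro rfl; exact huv.degree_pos_right.ne' ha
  simpa [hu, hv] using hB.mem_of_adj huv

lemma exists_isBipartiteWith_compl_degree_pos (hG : G.IsBipartite) :
    ∃ B : Finset V, G.IsBipartiteWith B Bᶜ ∧ #B ≤ #Bᶜ ∧
      (#B + 2 ≤ #Bᶜ → ∀ a ∉ B, 0 < G.degree a) := by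
  classical
  obtain ⟨B₀, hB₀⟩ := exists_isBipartiteWith_compl hG
  obtain ⟨B, hB, hmax⟩ := exists_max_image
    ({B | G.IsBipartiteWith B Bᶜ ∧ #B ≤ #Bᶜ} : Finset (Finset V)) card ⟨B₀, by simpa using hB₀⟩
  simp only [mem_filter, mem_univ, true_and] at hB hmax
  refine ⟨B, hB.1, hB.2, fun hlt a ha ↦ Nat.pos_of_ne_zero fun hdeg ↦ ?_⟩
  have hinsert := card_insert_of_notMem ha
  have hcompl := card_compl_add_card B
  have hcompl' := card_compl_add_card (insert a B)
  have := hmax (insert a B) ⟨isBipartiteWith_insert_of_degree_eq_zero hB.1 hdeg, by omega⟩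
  omega

/-- The largest independent set meeting the side `B` of a bipartition exactly in `S ⊆ B`: the
vertices of `S` and those outside `B` with no neighbor in `S`. -/
def indepExtension (G : SimpleGraph V) [DecidableRel G.Adj] (B S : Finset V) : Finset V :=
  S ∪ (Bᶜ \ S.biUnion fun v ↦ G.neighborFinset v)

lemma mem_indepExtension {v : V} :
    v ∈ indepExtension G B S ↔ v ∈ S ∨ v ∉ B ∧ ∀ u ∈ S, ¬ G.Adj u v := by
  simp [indepExtension]

lemma indepExtension_inter (hS : S ⊆ B) : indepExtension G B S ∩ B = S := by
  grind [mem_indepExtension]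

lemma isIndepSet_indepExtension (hB : G.IsBipartiteWith B Bᶜ) (hS : S ⊆ B) :
    G.IsIndepSet (indepExtension G B S) := by
  intro u hu v hv _ huv
  rw [mem_coe, mem_indepExtension] at hu hv
  obtain ⟨huB, hvB⟩ | ⟨huB, hvB⟩ := hB.mem_of_adj huv
  · exact (hv.resolve_left fun h ↦ hvB (hS h)).2 u (hu.resolve_right fun h ↦ h.1 huB) huv
  · exact (hu.resolve_left fun h ↦ huB (hS h)).2 v (hv.resolve_right fun h ↦ h.1 hvB) huv.symm

lemma disjoint_indepExtension_sdiff (hB : G.IsBipartiteWith B Bᶜ)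
    (hpos : ∀ a ∉ B, 0 < G.degree a) (hS : S ⊆ B) :
    Disjoint (indepExtension G B S) (indepExtension G B (B \ S)) := by
  rw [disjoint_left]
  intro a ha ha'
  rw [mem_indepExtension] at ha ha'
  by_cases haB : a ∈ B
  · grind
  obtain ⟨b, hab⟩ := (G.degree_pos_iff_exists_adj a).1 (hpos a haB)
  have hb : b ∈ B := hB.symm.mem_of_mem_adj haB hab
  have := hab.symm
  grind

lemma card_add_card_compl_le_card_indepExtension (hS : S ⊆ B) :
    #S + #Bᶜ ≤ #(indepExtension G B S) + ∑ v ∈ S, G.degree v := by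
  have hdisj : Disjoint S (Bᶜ \ S.biUnion fun v ↦ G.neighborFinset v) :=
    (disjoint_compl_right.mono_left hS).mono_right sdiff_subset
  have hbiUnion : #(S.biUnion fun v ↦ G.neighborFinset v) ≤ ∑ v ∈ S, G.degree v := card_biUnion_le
  have := le_card_sdiff (S.biUnion fun v ↦ G.neighborFinset v) Bᶜ
  rw [indepExtension, card_union_of_disjoint hdisj]
  omega

lemma card_biUnion_leafNeighborFinset (S : Finset V) :
    #(S.biUnion (leafNeighborFinset G)) = ∑ v ∈ S, #(leafNeighborFinset G v) := by
  refine card_biUnion fun v _ w _ hvw ↦ disjoint_left.2 fun a hv hw ↦ hvw ?_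
  exact eq_of_mem_leafNeighborFinset hw (mem_leafNeighborFinset.1 hv).1

lemma card_add_sum_card_leafNeighborFinset_le (hB : G.IsBipartiteWith B Bᶜ) (hS : S ⊆ B) :
    #S + ∑ b ∈ B \ S, #(leafNeighborFinset G b) ≤ #(indepExtension G B S) := by
  have hleaf : ∀ a ∈ (B \ S).biUnion (leafNeighborFinset G), a ∉ B ∧ ∀ s ∈ S, ¬ G.Adj s a := by
    intro a ha
    obtain ⟨b, hb, hba⟩ := mem_biUnion.1 ha
    rw [mem_sdiff] at hb
    exact ⟨notMem_of_mem_leafNeighborFinset hB hb.1 hba,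
      fun s hs hsa ↦ hb.2 (eq_of_mem_leafNeighborFinset hba hsa ▸ hs)⟩
  rw [← card_biUnion_leafNeighborFinset, ← card_union_of_disjoint]
  · refine card_le_card fun a ha ↦ mem_indepExtension.2 ?_
    exact (mem_union.1 ha).imp_right (hleaf a)
  · exact disjoint_left.2 fun a haS ha ↦ (hleaf a ha).1 (hS haS)

lemma card_compl_lt_sum_card_leafNeighborFinset_add (hE : #G.edgeFinset < Fintype.card V)
    (hB : G.IsBipartiteWith B Bᶜ) (hpos : ∀ a ∉ B, 0 < G.degree a) :
    #Bᶜ < ∑ b ∈ B, #(leafNeighborFinset G b) + #B := by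
  have hleaves : B.biUnion (leafNeighborFinset G) = {a ∈ Bᶜ | G.degree a = 1} := by
    ext a
    simp only [mem_biUnion, mem_filter, mem_compl]
    refine ⟨fun ⟨b, hb, hba⟩ ↦ ⟨notMem_of_mem_leafNeighborFinset hB hb hba,
      (mem_leafNeighborFinset.1 hba).2⟩, fun ⟨ha, hdeg⟩ ↦ ?_⟩
    obtain ⟨b, hab⟩ := (G.degree_pos_iff_exists_adj a).1 (hpos a ha)
    exact ⟨b, by simpa using hB.symm.mem_of_mem_adj (by simpa) hab,
      mem_leafNeighborFinset.2 ⟨hab.symm, hdeg⟩⟩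
  have hdeg : ∑ a ∈ Bᶜ, 2 ≤ ∑ a ∈ Bᶜ, (G.degree a + if G.degree a = 1 then 1 else 0) := by
    refine sum_le_sum fun a ha ↦ ?_
    have := hpos a (mem_compl.1 ha)
    split_ifs <;> omega
  rw [sum_add_distrib, ← card_filter, ← hleaves, card_biUnion_leafNeighborFinset, sum_const,
    smul_eq_mul] at hdeg
  have hsum : ∑ a ∈ Bᶜ, G.degree a < Fintype.card V :=
    sum_degree_lt_card_of_isBipartiteWith hE (by simpa using hB.symm)
  have hcard := card_compl_add_card B
  omega

lemma exists_subset_sum_degree_lt (hE : #G.edgeFinset < Fintype.card V)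
    (hB : G.IsBipartiteWith B Bᶜ) (hle : #B ≤ #Bᶜ) :
    ∃ S ⊆ B, #S = #B - Fintype.card V / 3 ∧
      ∑ v ∈ S, G.degree v < Fintype.card V / 3 + Fintype.card V % 3 := by
  obtain ⟨S, hS, hScard, havg⟩ := exists_subset_card_eq_card_nsmul_sum_le B (G.degree ·)
    (Nat.sub_le #B (Fintype.card V / 3))
  refine ⟨S, hS, hScard, ?_⟩
  have hn := Nat.div_add_mod (Fintype.card V) 3
  have hcompl := card_compl_add_card B
  have hsum : ∑ v ∈ B, G.degree v < Fintype.card V :=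
    sum_degree_lt_card_of_isBipartiteWith (t := Bᶜ) hE (by simpa using hB)
  obtain hzero | hpos := Nat.eq_zero_or_pos #S
  · rw [card_eq_zero.1 hzero, sum_empty]
    omega
  simp only [smul_eq_mul, ← hScard] at havg
  set k := Fintype.card V / 3
  set r := Fintype.card V % 3
  have hBcard : #B = #S + k := by omega
  have hratio : #S * Fintype.card V ≤ #B * (k + r) := by
    have : 2 * #S ≤ k + r := by omega
    rw [← hn, hBcard]
    nlinarith
  refine lt_of_mul_lt_mul_left (a := #B) ?_ (Nat.zero_le _)
  calc
    #B * ∑ v ∈ S, G.degree v ≤ #S * ∑ v ∈ B, G.degree v := havg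
    _ < #S * Fintype.card V := Nat.mul_lt_mul_of_pos_left hsum hpos
    _ ≤ #B * (k + r) := hratio

lemma equitablyColorable_three_of_le_card (hE : #G.edgeFinset < Fintype.card V)
    (hB : G.IsBipartiteWith B Bᶜ) (hle : #B ≤ #Bᶜ) (hcard : Fintype.card V / 3 ≤ #B) :
    EquitablyColorable G 3 := by
  obtain ⟨S, hS, hScard, hdeg⟩ := exists_subset_sum_degree_lt hE hB hle
  have hcompl := card_compl_add_card B
  have hBS := card_sdiff_of_subset hS
  have hext := card_add_card_compl_le_card_indepExtension (G := G) hS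
  have hinter := indepExtension_inter (G := G) hS
  refine equitablyColorable_three_of_cover (P := B \ S) (Q := indepExtension G B S)
    ((isIndepSet_of_isBipartiteWith hB).mono (by simp)) (isIndepSet_indepExtension hB hS)
    ?_ (by grind) (isIndepSet_of_isBipartiteWith hB.symm) ?_ (by omega) ?_ (by omega)
  · rw [disjoint_left]
    grind
  · have := card_le_card (inter_subset_left : (B \ S) ∩ B ⊆ B \ S)
    omega
  · rw [hinter]
    omega

lemma equitablyColorable_three_of_le_card_indepExtension (hB : G.IsBipartiteWith B Bᶜ)
    (hcard : #B ≤ Fintype.card V / 3) (hpos : ∀ a ∉ B, 0 < G.degree a) (hS : S ⊆ B)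
    (h₁ : Fintype.card V / 3 ≤ #(indepExtension G B S))
    (h₂ : (Fintype.card V + 1) / 3 ≤ #(indepExtension G B (B \ S))) :
    EquitablyColorable G 3 := by
  have hinter (P : Finset V) : #(P ∩ B) ≤ #B := card_le_card inter_subset_right
  refine equitablyColorable_three_of_cover (isIndepSet_indepExtension hB hS)
    (isIndepSet_indepExtension hB sdiff_subset) (disjoint_indepExtension_sdiff hB hpos hS) ?_
    (isIndepSet_of_isBipartiteWith hB.symm) ((hinter _).trans hcard) h₁
    ((hinter _).trans (by omega)) h₂
  intro b
  grind [indepExtension]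

end DecidableEq

lemma equitablyColorable_three_of_lt_card_leafNeighborFinset (hB : G.IsBipartiteWith B Bᶜ)
    (hcard : #B < Fintype.card V / 3) (hpos : ∀ a ∉ B, 0 < G.degree a) {b : V} (hb : b ∈ B)
    (hdeg : G.degree b ≤ Fintype.card V / 3 + Fintype.card V % 3 + 2)
    (hleaf : (Fintype.card V + 1) / 3 < #B + #(leafNeighborFinset G b)) :
    EquitablyColorable G 3 := by
  classical
  have hbB : {b} ⊆ B := singleton_subset_iff.2 hb
  have hcompl := card_compl_add_card B
  have hBb := card_sdiff_of_subset hbB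
  have hext := card_add_card_compl_le_card_indepExtension (G := G) hbB
  have hext' := card_add_sum_card_leafNeighborFinset_le hB (sdiff_subset : B \ {b} ⊆ B)
  rw [Finset.sdiff_sdiff_eq_self hbB] at hext'
  rw [sum_singleton] at hext hext'
  rw [card_singleton] at hext hBb
  refine equitablyColorable_three_of_le_card_indepExtension hB hcard.le hpos hbB ?_ ?_ <;> omega

lemma equitablyColorable_three_of_card_leafNeighborFinset_le
    (hE : #G.edgeFinset < Fintype.card V) (hB : G.IsBipartiteWith B Bᶜ)
    (hcard : #B < Fintype.card V / 3) (hpos : ∀ a ∉ B, 0 < G.degree a)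
    (hleaf : ∀ b ∈ B, #B + #(leafNeighborFinset G b) ≤ (Fintype.card V + 1) / 3) :
    EquitablyColorable G 3 := by
  classical
  have hcompl := card_compl_add_card B
  have hleaves := card_compl_lt_sum_card_leafNeighborFinset_add hE hB hpos
  have hweight (S : Finset V) : ∑ b ∈ S, ((#(leafNeighborFinset G b) : ℤ) - 1) =
      (∑ b ∈ S, #(leafNeighborFinset G b) : ℕ) - #S := by
    simp
  obtain ⟨S, hS, hle, hlt⟩ := exists_subset_sum_mem_Ico (s := B)
    (f := fun b ↦ (#(leafNeighborFinset G b) : ℤ) - 1) (p := (Fintype.card V / 3 : ℕ) - #B)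
    (d := (Fintype.card V / 3 : ℕ) - #B) (fun b hb ↦ by have := hleaf b hb; omega) (by omega)
    (by rw [hweight]; omega)
  rw [hweight] at hle hlt
  have hsum := sum_sdiff (f := fun b ↦ #(leafNeighborFinset G b)) hS
  have hBS := card_sdiff_of_subset hS
  have hBScard := card_le_card hS
  have hext := card_add_sum_card_leafNeighborFinset_le hB hS
  have hext' := card_add_sum_card_leafNeighborFinset_le hB (sdiff_subset : B \ S ⊆ B)
  rw [Finset.sdiff_sdiff_eq_self hS] at hext'
  refine equitablyColorable_three_of_le_card_indepExtension hB hcard.le hpos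
    (sdiff_subset : B \ S ⊆ B) ?_ ?_
  · omega
  · rw [Finset.sdiff_sdiff_eq_self hS]
    omega

theorem equitablyColorable_three_of_isBipartite (hG : G.IsBipartite)
    (hE : #G.edgeFinset < Fintype.card V)
    (hd : ∀ v, G.degree v ≤ Fintype.card V / 3 + Fintype.card V % 3 + 2) :
    EquitablyColorable G 3 := by
  classical
  obtain ⟨B, hB, hle, hpos⟩ := exists_isBipartiteWith_compl_degree_pos hG
  obtain hcard | hcard := le_or_gt (Fintype.card V / 3) #B
  · exact equitablyColorable_three_of_le_card hE hB hle hcard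
  · have := card_compl_add_card B
    replace hpos := hpos (by omega)
    by_cases! hleaf : ∀ b ∈ B, #B + #(leafNeighborFinset G b) ≤ (Fintype.card V + 1) / 3
    · exact equitablyColorable_three_of_card_leafNeighborFinset_le hE hB hcard hpos hleaf
    · obtain ⟨b, hb, hlt⟩ := hleaf
      exact equitablyColorable_three_of_lt_card_leafNeighborFinset hB hcard hpos hb (hd b) hlt

end Graph

theorem stmt11_general {V : Type*} [Fintype V] [LinearOrder V] (hV : 2 ≤ Fintype.card V)
    (G : SimpleGraph V) [DecidableRel G.Adj] (hG : G.IsBipartite)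
    (hE : #G.edgeFinset < Fintype.card V)
    (hd : 3 * G.maxDegree ≤ Fintype.card V + 8 ∨ 3 * G.maxDegree = Fintype.card V + 10) :
    ∃ X : Matrix (Fin 2) V (ZMod 2),
      X.rank = 2 ∧
      (∀ j, (fun i ↦ X i j) ≠ 0) ∧
      (∀ j k, G.Adj j k → (fun i ↦ X i j) ≠ (fun i ↦ X i k)) ∧
      #{p : V × V | p.1 < p.2 ∧ (fun i ↦ X i p.1) ≠ (fun i ↦ X i p.2)} =
        (Fintype.card V).choose 2 - Fintype.card V / 3 * (Fintype.card V % 3) -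
          3 * (Fintype.card V / 3).choose 2 := by
  obtain ⟨c, hc⟩ := equitablyColorable_three_of_isBipartite hG hE fun v ↦ by
    have := G.degree_le_maxDegree v
    omega
  obtain ⟨u, v, huv⟩ := exists_apply_ne_of_equitableOn hV hc
  refine ⟨Matrix.of fun i j ↦ nonzeroVec (c j) i, rank_nonzeroVec_eq_two huv,
    fun j ↦ nonzeroVec_ne_zero (c j),
    fun j k hjk ↦ nonzeroVec_injective.ne (c.valid hjk), ?_⟩
  have hpairs := card_filter_lt_ne_of_equitableOn hc
  rw [Fintype.card_fin] at hpairs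
  simpa only [Matrix.of_apply, nonzeroVec_injective.ne_iff] using hpairs

/-- Bollobás–Guy: if `G` is an acyclic requirements graph on `n` vertices whose maximum
degree `d` satisfies `3d ≤ n + 8` or `3d = n + 10`, then a `2^n` factorial in blocks of
size four exists providing all required estimates and achieving the bound
`φ_max = C(n,2) - v·w - 3·C(v,2)` with `v = n / 3`, `w = n % 3` (equivalently, `G`
admits an equitable proper 3-coloring). -/
theorem stmt11 (n : ℕ) (hn : 2 ≤ n)
    (G : SimpleGraph (Fin n)) [DecidableRel G.Adj]
    (hG : G.IsAcyclic)
    (hd : 3 * G.maxDegree ≤ n + 8 ∨ 3 * G.maxDegree = n + 10) :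
    ∃ X : Matrix (Fin 2) (Fin n) (ZMod 2),
      X.rank = 2 ∧
      (∀ j : Fin n, (fun i => X i j) ≠ 0) ∧
      (∀ j k : Fin n, G.Adj j k → (fun i => X i j) ≠ (fun i => X i k)) ∧
      (Finset.univ.filter
          (fun p : Fin n × Fin n =>
            p.1 < p.2 ∧ (fun i => X i p.1) ≠ (fun i => X i p.2))).card =
        Nat.choose n 2 - (n / 3) * (n % 3) - 3 * Nat.choose (n / 3) 2 := by
  have : Nonempty (Fin n) := ⟨⟨0, by omega⟩⟩
  simpa using stmt11_general (by simpa) G hG.isBipartite (card_edgeFinset_lt_of_isAcyclic hG)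
    (by simpa)
end

section
/- Let S be a set of five pairwise distinct nonzero vectors in Fin 3 → ZMod 2. Then the sum (over ZMod 2) of the five vectors in S is itself nonzero and is an element of S. -/
/-! The sum of all vectors of a finite vector space is fixed by every linear automorphism. These
act transitively on the nonzero vectors, so the sum is zero unless there is exactly one nonzero
vector. Over `ZMod 2`, a set and its complement therefore have the same sum. If the complement
is `{a, b, c}`, this sum is `a + b + c`, the fourth point of the affine plane through
`a`, `b` and `c`, so it lies outside the complement. -/

theorem exists_linearEquiv_apply_eq_of_ne_zero {K V : Type*} [DivisionRing K] [AddCommGroup V]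
    [Module K V] {x y : V} (hx : x ≠ 0) (hy : y ≠ 0) : ∃ g : V ≃ₗ[K] V, g x = y := by
  let ex := LinearEquiv.toSpanNonzeroSingleton K V x hx
  let ey := LinearEquiv.toSpanNonzeroSingleton K V y hy
  obtain ⟨g, hg⟩ := Submodule.exists_linearEquiv_restrict_eq (ex.symm ≪≫ₗ ey)
  refine ⟨g, ?_⟩
  calc
    g x = g (ex 1) := by simp [ex]
    _ = ey (ex.symm (ex 1)) := (hg (ex 1)).symm
    _ = y := by simp [ey]

theorem addEquiv_apply_sum_univ {M : Type*} [AddCommMonoid M] [Fintype M] (g : M ≃+ M) :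
    g (∑ v, v) = ∑ v, v := by
  rw [map_sum]
  exact Equiv.sum_comp g.toEquiv id

theorem sum_univ_eq_zero_of_card_ne_two (K V : Type*) [DivisionRing K] [AddCommGroup V]
    [Module K V] [Fintype V] (hV : Fintype.card V ≠ 2) : ∑ v : V, v = 0 := by
  by_contra hsum
  have eq_sum (u : V) (hu : u ≠ 0) : u = ∑ v, v := by
    obtain ⟨g, hg⟩ := exists_linearEquiv_apply_eq_of_ne_zero (K := K) hsum hu
    exact hg.symm.trans (addEquiv_apply_sum_univ g.toAddEquiv)
  rw [← Nat.card_eq_fintype_card] at hV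
  exact hV ((Nat.card_eq_two_iff' 0).mpr ⟨∑ v, v, hsum, eq_sum⟩)

section ZModTwo

variable {V : Type*} [AddCommGroup V] [Module (ZMod 2) V]

theorem sum_eq_sum_compl_of_card_ne_two [Fintype V] [DecidableEq V] (S : Finset V)
    (hV : Fintype.card V ≠ 2) : ∑ v ∈ S, v = ∑ v ∈ Sᶜ, v := by
  have hsum : ∑ v ∈ S, v + ∑ v ∈ Sᶜ, v = 0 :=
    (Finset.sum_add_sum_compl S id).trans (sum_univ_eq_zero_of_card_ne_two (ZMod 2) V hV)
  rw [eq_neg_of_add_eq_zero_left hsum, ZModModule.neg_eq_self]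

theorem add_add_ne_left_of_ne {a b c : V} (hbc : b ≠ c) : a + b + c ≠ a := by
  rw [add_assoc, Ne, add_eq_left, ← ZModModule.sub_eq_add, sub_eq_zero]
  exact hbc

theorem sum_notMem_of_card_eq_three {T : Finset V} (hT : T.card = 3) : ∑ v ∈ T, v ∉ T := by
  classical
  obtain ⟨a, b, c, hab, hac, hbc, rfl⟩ := Finset.card_eq_three.mp hT
  have hsum : ∑ v ∈ {a, b, c}, v = a + b + c := by
    rw [Finset.sum_insert (by simp [hab, hac]), Finset.sum_pair hbc, add_assoc]
  have hb : a + b + c ≠ b := add_comm b a ▸ add_add_ne_left_of_ne hac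
  have hc : a + b + c ≠ c := add_rotate c a b ▸ add_add_ne_left_of_ne hab
  simp [hsum, add_add_ne_left_of_ne hbc, hb, hc]

theorem stmt15_general [Fintype V] (S : Finset V) (hcard : S.card + 3 = Fintype.card V) :
    ∑ v ∈ S, v ∈ S := by
  classical
  have hcompl : Sᶜ.card = 3 := by rw [Finset.card_compl]; lia
  have hnotMem := sum_notMem_of_card_eq_three hcompl
  rwa [← sum_eq_sum_compl_of_card_ne_two S (by lia), Finset.notMem_compl] at hnotMem

end ZModTwo

/-- If `S` is a set of five pairwise distinct nonzero vectors of `Fin 3 → ZMod 2`, then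
the sum of the vectors of `S` is nonzero and is itself an element of `S` (so the sixth
column of the generator matrix duplicates one of the five chosen columns). -/
theorem stmt15 (S : Finset (Fin 3 → ZMod 2)) (hcard : S.card = 5)
    (h0 : ∀ v ∈ S, v ≠ 0) :
    (∑ v ∈ S, v) ≠ 0 ∧ (∑ v ∈ S, v) ∈ S := by
  have hmem : ∑ v ∈ S, v ∈ S := stmt15_general S (by simp [hcard])
  exact ⟨h0 _ hmem, hmem⟩
end
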